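/- arXiv:1212.0216 — 2 statements merged into one kernel-verified Lean document; each statement's English description precedes it below -/
import Mathlib

section
/- Let n ≥ 2 and let U be a one-parameter unipotent subgroup of G = SL_n(ℝ) normalized by A; equivalently, U = {I + s·E_{ij} : s ∈ ℝ} for some pair i ≠ j, where E_{ij} is the elementary matrix. Then every orbit on X = SL_n(ℝ)/SL_n(ℤ) of the subgroup of G generated by A and U is unbounded; that is, for every x ∈ X, the closure of the orbit ⟨A ∪ U⟩·x in X is not compact. -/
/-!
The easy half of Mahler's criterion says that a bounded subset of `SL_n(ℝ)/SL_n(ℤ)` consists of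
lattices `g ℤⁿ` whose nonzero vectors stay away from `0` (`exists_nat_of_isCompact`, in the form:
each point of a compact set is represented by some `b` with uniformly bounded `b⁻¹`). It therefore
suffices to shrink a nonzero lattice vector. Write the point as `gΓ` and pick a column `v` of `g`
with `v_j ≠ 0`. The element `I - (v_i / v_j) E_{ij}` of `U` kills the `i`-th coordinate of `v`, and
then the element of `A` with entries `c` off the position `i` and `c^{-(n-1)}` at `i` multiplies
the resulting vector by `c`. Letting `c → 0` contradicts boundedness.
-/

open Matrix MeasureTheory Pointwise

/-- `G = SL_n(ℝ)`. -/
abbrev SLR (n : ℕ) := Matrix.SpecialLinearGroup (Fin n) ℝ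

/-- The standard topology on `SL_n(ℝ)`, as a subspace of the matrices. -/
instance (n : ℕ) : TopologicalSpace (SLR n) :=
  inferInstanceAs (TopologicalSpace {A : Matrix (Fin n) (Fin n) ℝ // A.det = 1})

/-- `Γ = SL_n(ℤ)`, viewed as a subgroup of `SL_n(ℝ)`. -/
def GammaZ (n : ℕ) : Subgroup (SLR n) :=
  (Matrix.SpecialLinearGroup.map (n := Fin n) (Int.castRingHom ℝ)).range

/-- `A`: the set of diagonal matrices in `SL_n(ℝ)` with positive diagonal entries. -/
def posDiag (n : ℕ) : Set (SLR n) :=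
  {g | (∀ i j, i ≠ j → g.1 i j = 0) ∧ (∀ i, 0 < g.1 i i)}

/-- `A_α`: the kernel of the root `α = α_{ij}`, `α(a) = a_{ii}/a_{jj}`, i.e. the set of
`a ∈ A` with `a_{ii} = a_{jj}`. -/
def rootKer (n : ℕ) (i j : Fin n) : Set (SLR n) :=
  {g | g ∈ posDiag n ∧ g.1 i i = g.1 j j}

/-- `u_α(s) = I + s E_{ij}`, an element of the root group `U_α`. -/
noncomputable def elemU (n : ℕ) {i j : Fin n} (hij : i ≠ j) (s : ℝ) : SLR n :=
  ⟨Matrix.transvection i j s, Matrix.det_transvection_of_ne i j hij s⟩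

/-- A nonempty subset `Z` is `S`-minimal if it is invariant under each element of `S`
and every `S`-orbit of a point of `Z` is dense in `Z`. -/
def IsMinimalOn {G X : Type*} [SMul G X] [TopologicalSpace X] (S : Set G) (Z : Set X) : Prop :=
  Z.Nonempty ∧ (∀ g ∈ S, (g • ·) '' Z = Z) ∧ ∀ z ∈ Z, Z ⊆ closure ((· • z) '' S)

/-- `Γ` is a lattice in `G`: a discrete subgroup such that `G/Γ` carries a (nonzero)
finite `G`-invariant Borel measure. -/
def IsLattice {G : Type*} [Group G] [TopologicalSpace G] (Γ : Subgroup G) : Prop :=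
  DiscreteTopology Γ ∧
    ∃ μ : @Measure (G ⧸ Γ) (borel _),
      μ Set.univ ≠ 0 ∧ μ Set.univ ≠ ⊤ ∧
      ∀ (g : G) (s : Set (G ⧸ Γ)), μ ((g • ·) ⁻¹' s) = μ s

/-- A compact subset of `SL_n(ℝ)/SL_n(ℤ)` lifts to a set of matrices whose inverses have uniformly
bounded entries: the images of the open sets `{b | ∀ p q, |(b⁻¹) p q| < m}` form an increasing open
cover of the quotient. -/
lemma exists_nat_of_isCompact {n : ℕ} {K : Set (SLR n ⧸ GammaZ n)} (hK : IsCompact K) :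
    ∃ m : ℕ, ∀ y ∈ K, ∃ b : SLR n, (b : SLR n ⧸ GammaZ n) = y ∧
      ∀ p q, |(b⁻¹).1 p q| < m := by
  have : IsTopologicalGroup (SLR n) :=
    Matrix.SpecialLinearGroup.topologicalGroup
  let B : ℕ → Set (SLR n) := fun m => {b | ∀ p q, |(b⁻¹).1 p q| < m}
  have hB : ∀ m, IsOpen (B m) := by
    intro m
    simp only [B, Set.ofPred_forall]
    refine isOpen_iInter_of_finite fun p => isOpen_iInter_of_finite fun q => ?_
    have hc : Continuous fun b : SLR n => (b⁻¹).1 p q := by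
      have h1 : Continuous fun b : SLR n => (b⁻¹).1 :=
        continuous_subtype_val.comp (continuous_inv (G := SLR n))
      exact h1.matrix_elem p q
    exact isOpen_lt hc.abs continuous_const
  have hmono : Monotone B := fun m m' hm b hb p q =>
    (hb p q).trans_le (by exact_mod_cast hm)
  obtain ⟨m, hm⟩ := hK.elim_directed_cover
    (fun m => (QuotientGroup.mk : SLR n → SLR n ⧸ GammaZ n) '' B m)
    (fun m => QuotientGroup.isOpenMap_coe _ (hB m))
    (by
      intro y _
      obtain ⟨b, rfl⟩ := QuotientGroup.mk_surjective y
      obtain ⟨m, hm⟩ := exists_nat_gt (∑ p, ∑ q, |(b⁻¹).1 p q|)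
      refine Set.mem_iUnion.2 ⟨m, b, fun p q => lt_of_le_of_lt ?_ hm, rfl⟩
      exact (Finset.single_le_sum (f := fun q => |(b⁻¹).1 p q|)
        (fun _ _ => abs_nonneg _) (Finset.mem_univ q)).trans
        (Finset.single_le_sum (f := fun p => ∑ q, |(b⁻¹).1 p q|)
        (fun _ _ => Finset.sum_nonneg fun _ _ => abs_nonneg _) (Finset.mem_univ p)))
    (Monotone.directed_le fun _ _ h => Set.image_mono (hmono h))
  exact ⟨m, fun y hy => by
    obtain ⟨b, hb, rfl⟩ := hm hy
    exact ⟨b, rfl, hb⟩⟩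

/-- The diagonal matrix with entry `c^{-(n-1)}` at position `i` and `c` elsewhere. -/
noncomputable def contractDiag {n : ℕ} (i : Fin n) (c : ℝ) (hc : 0 < c) : SLR n :=
  ⟨Matrix.diagonal (Function.update (fun _ => c) i (c ^ (n - 1))⁻¹), by
    rw [Matrix.det_diagonal, Finset.prod_update_of_mem (Finset.mem_univ i), Finset.prod_const,
      Finset.card_sdiff_of_subset (Finset.subset_univ _), Finset.card_univ, Fintype.card_fin,
      Finset.card_singleton]
    exact inv_mul_cancel₀ (pow_pos hc _).ne'⟩

lemma contractDiag_mem {n : ℕ} (i : Fin n) (c : ℝ) (hc : 0 < c) :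
    contractDiag i c hc ∈ posDiag n := by
  refine ⟨fun p q hpq => Matrix.diagonal_apply_ne _ hpq, fun p => ?_⟩
  change 0 < Matrix.diagonal _ p p
  rw [Matrix.diagonal_apply_eq]
  by_cases h : p = i
  · subst h
    rw [Function.update_self]
    positivity
  · rw [Function.update_of_ne h]
    exact hc

/-- Once the shear has killed the `i`-th coordinate of the `k`-th column of `g`, the contracting
diagonal matrix scales that whole column down. -/
lemma abs_contract_le {n : ℕ} {i j : Fin n} (hij : i ≠ j) (g : SLR n) (k : Fin n)
    (hk : g.1 j k ≠ 0) (c : ℝ) (hc : 0 < c) (p : Fin n) :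
    |(contractDiag i c hc * elemU n hij (-(g.1 i k / g.1 j k)) * g).1 p k| ≤ c * |g.1 p k| := by
  have h : (contractDiag i c hc * elemU n hij (-(g.1 i k / g.1 j k)) * g).1 p k =
      Function.update (fun _ => c) i (c ^ (n - 1))⁻¹ p *
        (Matrix.transvection i j (-(g.1 i k / g.1 j k)) * g.1) p k := by
    rw [mul_assoc]
    exact Matrix.diagonal_mul _ _ _ _
  rw [h]
  by_cases hp : p = i
  · subst hp
    rw [Matrix.transvection_mul_apply_same, neg_mul, div_mul_cancel₀ _ hk, add_neg_cancel,
      mul_zero, abs_zero]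
    positivity
  · rw [Matrix.transvection_mul_apply_of_ne _ _ _ _ hp, Function.update_of_ne hp, abs_mul,
      abs_of_pos hc]

/-- Every orbit on `X = SL_n(ℝ)/SL_n(ℤ)` of the subgroup generated by `A` and a
one-parameter unipotent subgroup `U = {I + s E_{ij}}` normalized by `A` is unbounded. -/
theorem statement_0 (n : ℕ) (hn : 2 ≤ n) (i j : Fin n) (hij : i ≠ j)
    (x : SLR n ⧸ GammaZ n) :
    ¬ IsCompact (closure ((· • x) ''
      (Subgroup.closure
        (posDiag n ∪ {u : SLR n | ∃ s : ℝ, u = elemU n hij s}) : Set (SLR n)))) := by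
  intro hK
  obtain ⟨m, hm⟩ := exists_nat_of_isCompact hK
  obtain ⟨g, rfl⟩ := QuotientGroup.mk_surjective x
  obtain ⟨k, hk⟩ : ∃ k, g.1 j k ≠ 0 := by
    by_contra! h
    exact one_ne_zero (g.2.symm.trans (Matrix.det_eq_zero_of_row_eq_zero j h))
  set L := ∑ p, |g.1 p k| with hL
  have hL0 : 0 ≤ L := Finset.sum_nonneg fun _ _ => abs_nonneg _
  have hden : 0 < m * L + 1 := by positivity
  -- The scale `c` is chosen so that `m * c * L < 1`.
  set c := (m * L + 1)⁻¹ with hcdef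
  have hc : 0 < c := inv_pos.2 hden
  set h := contractDiag i c hc * elemU n hij (-(g.1 i k / g.1 j k)) with hh
  have hmem : h ∈ Subgroup.closure
      (posDiag n ∪ {u : SLR n | ∃ s : ℝ, u = elemU n hij s}) :=
    mul_mem (Subgroup.subset_closure (Or.inl (contractDiag_mem i c hc)))
      (Subgroup.subset_closure (Or.inr ⟨_, rfl⟩))
  obtain ⟨b, hb, hbm⟩ := hm _ (subset_closure (Set.mem_image_of_mem (· • _) hmem))
  have hb' : (b : SLR n ⧸ GammaZ n) = ((h * g : SLR n) : SLR n ⧸ GammaZ n) := hb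
  obtain ⟨N, hN⟩ := QuotientGroup.eq.1 hb'
  -- The `k`-th column of the integer matrix `N = b⁻¹ * h * g` has entries of modulus below `1`.
  have hcol : ∀ p, N.1 p k = 0 := by
    intro p
    have he : ((N.1 p k : ℤ) : ℝ) = ∑ q, (b⁻¹).1 p q * (h * g).1 q k :=
      congrArg (fun M : SLR n => M.1 p k) hN
    have hlt : |((N.1 p k : ℤ) : ℝ)| < 1 := by
      rw [he]
      calc |∑ q, (b⁻¹).1 p q * (h * g).1 q k|
          ≤ ∑ q, |(b⁻¹).1 p q * (h * g).1 q k| := Finset.abs_sum_le_sum_abs _ _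
        _ ≤ ∑ q, m * (c * |g.1 q k|) := by
            refine Finset.sum_le_sum fun q _ => ?_
            rw [abs_mul]
            exact mul_le_mul (hbm p q).le (abs_contract_le hij g k hk c hc q)
              (abs_nonneg _) (Nat.cast_nonneg m)
        _ = (m * L) / (m * L + 1) := by
            rw [← Finset.mul_sum, ← Finset.mul_sum, ← hL, hcdef]
            ring
        _ < 1 := by
            rw [div_lt_one hden]
            linarith
    exact Int.abs_lt_one_iff.1 (by exact_mod_cast hlt)
  exact one_ne_zero (N.2.symm.trans (Matrix.det_eq_zero_of_column_eq_zero k hcol))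
end

section
/- The following five statements are equivalent: (M) every A-orbit in X with compact closure is closed; (a) every compact A-minimal subset of X is a single compact A-orbit; (b) for every root α, every compact A-minimal subset Y ⊆ X is also A_α-minimal; (c) for every root α and every compact A-minimal subset Y ⊆ X, every A_α-minimal subset Y_α ⊆ Y satisfies A·Y_α = Y; (d) for every root α and every compact A-minimal subset Y ⊆ X, there exists an A_α-minimal subset Y_α ⊆ Y with A·Y_α = Y. -/
/-! Throughout, `X = SL_n(ℝ)/SL_n(ℤ)` is viewed as the space of unimodular lattices, and only the
following facts about it are used.

* If the `A`-orbit of a lattice is bounded, no nonzero lattice vector has a vanishing coordinate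
  (`coord_ne_zero`): otherwise elements of `A` shrink that vector to zero, against the easy half of
  Mahler's criterion. As every half of `U_α y` contains lattices with such a vector, a compact
  `A`-invariant set contains no half-orbit of a root group (`no_half_orbit`).
* If points `g y` with `g → 1` transversal to `A` lie in a compact `A`-invariant set `Z`, then
  conjugating by `A` blows `g` up to bounded size, and further contractions kill all matrix entries
  but one. Hence a nontrivial element of some `U_α` maps a point of the compact `A`-invariant set
  `Y ∋ y` into `Z` (`isolate_root`).
* On a compact `A`-orbit every `A_α`-orbit is dense (`rootKer_orbit_dense`). The stabiliser of a
  point is cocompact in `A`; if its image under `α` were discrete, it would contain an element on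
  which `α = 1` but which has another, simple eigenvalue. The characteristic polynomial of that
  element is integral, so an integral polynomial in it kills the eigenvalue that occurs twice
  without being zero, and this gives lattice vectors with a vanishing coordinate. Here `n ≥ 3` is
  essential.

(M) ⇔ (a): an `A`-minimal set is the closure of the orbit of each of its points. Conversely the
closure `Z` of a bounded orbit `A x` contains a minimal set, which is a compact orbit `Y = A y` by
(a). If `x ∉ Y`, isolating a root gives `u ∈ U_α` mapping a point of `Y` into `Z`; by density of
`A_α`-orbits in `Y`, `u Y ⊆ Z`, and conjugation by `A` yields a half-orbit of `U_α` in `Z`.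

(a) ⇒ (b) is the density of `A_α`-orbits, (b) ⇒ (c) is clear, and (c) ⇒ (d) is Zorn's lemma.

(d) ⇒ (a): if an `A`-minimal set `Y` is not locally a piece of an `A`-orbit, isolating a root gives
`u ∈ U_α` mapping a point of `Y` into `Y`. Let `M ⊆ Y` be `A_α`-minimal with `A M = Y`. Elements
commuting with `A_α` and mapping some point of `M` into `M` stabilise `M`; correcting `u` by an
element of `A`, and taking commutators if needed, produces a nontrivial element of `U_α` that
stabilises `M` (`exists_elemU_stabilizer`). Rescaling its powers by `A` gives a half-orbit of `U_α`
in `Y` (`elemU_notMem_stabilizer`), a contradiction.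
-/

open Matrix MeasureTheory Pointwise

section

open Filter Topology

/-! ### Topology of `SL_n(ℝ)` and of `X` -/

instance instTopGroupSLR (n : ℕ) : IsTopologicalGroup (SLR n) :=
  Matrix.SpecialLinearGroup.topologicalGroup

lemma SLR.isClosedEmbedding_val (n : ℕ) :
    IsClosedEmbedding (Subtype.val : SLR n → Matrix (Fin n) (Fin n) ℝ) :=
  Matrix.SpecialLinearGroup.isClosedEmbedding_val

lemma SLR.continuous_entry {n : ℕ} (p q : Fin n) : Continuous fun g : SLR n => g.1 p q :=
  (SLR.isClosedEmbedding_val n).continuous.matrix_elem p q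

lemma SLR.tendsto_of_entries {n : ℕ} {ι : Type*} {l : Filter ι} {f : ι → SLR n} {g : SLR n}
    (h : ∀ p q, Tendsto (fun k => (f k).1 p q) l (𝓝 (g.1 p q))) : Tendsto f l (𝓝 g) := by
  refine (SLR.isClosedEmbedding_val n).isEmbedding.tendsto_nhds_iff.2 ?_
  exact tendsto_pi_nhds.2 fun p => tendsto_pi_nhds.2 fun q => h p q

lemma SLR.ext' {n : ℕ} {g h : SLR n} (H : ∀ p q, g.1 p q = h.1 p q) : g = h :=
  Subtype.ext (Matrix.ext H)

lemma SLR.det_val {n : ℕ} (g : SLR n) : g.1.det = 1 := g.2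

lemma SLR.val_mul {n : ℕ} (g h : SLR n) : (g * h).1 = g.1 * h.1 := rfl

lemma SLR.inv_mul_val {n : ℕ} (g : SLR n) : (g⁻¹).1 * g.1 = 1 := by
  rw [← SLR.val_mul, inv_mul_cancel]; rfl

lemma SLR.mul_inv_val {n : ℕ} (g : SLR n) : g.1 * (g⁻¹).1 = 1 := by
  rw [← SLR.val_mul, mul_inv_cancel]; rfl

/-- The image in `ℝⁿ` of an integral vector. -/
def intVec {n : ℕ} (v : Fin n → ℤ) : Fin n → ℝ := fun p => (v p : ℝ)

lemma mem_GammaZ_iff {n : ℕ} (g : SLR n) :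
    g ∈ GammaZ n ↔ ∃ M : Matrix (Fin n) (Fin n) ℤ, M.det = 1 ∧
      g.1 = M.map (Int.castRingHom ℝ) := by
  constructor
  · rintro ⟨γ, rfl⟩
    exact ⟨γ.1, γ.2, rfl⟩
  · rintro ⟨M, hM, h⟩
    exact ⟨⟨M, hM⟩, Subtype.ext h.symm⟩

lemma isClosed_GammaZ (n : ℕ) : IsClosed (GammaZ n : Set (SLR n)) := by
  have : (GammaZ n : Set (SLR n)) =
      ⋂ p, ⋂ q, (fun g : SLR n => g.1 p q) ⁻¹' Set.range (Int.cast : ℤ → ℝ) := by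
    ext g
    simp only [SetLike.mem_coe, mem_GammaZ_iff, Set.mem_iInter, Set.mem_preimage, Set.mem_range]
    constructor
    · rintro ⟨M, -, h⟩ p q
      exact ⟨M p q, by rw [h]; rfl⟩
    · intro h
      choose M hM using h
      have hg : g.1 = (Matrix.of M).map (Int.castRingHom ℝ) := by
        ext p q; simp [hM]
      refine ⟨Matrix.of M, ?_, hg⟩
      have := SLR.det_val g
      rw [hg, ← RingHom.mapMatrix_apply, ← RingHom.map_det] at this
      exact Int.cast_injective (α := ℝ) (by simpa using this)
  rw [this]
  exact isClosed_iInter fun p => isClosed_iInter fun q =>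
    Int.isClosedEmbedding_coe_real.isClosed_range.preimage (SLR.continuous_entry p q)

instance instT2X (n : ℕ) : T2Space (SLR n ⧸ GammaZ n) := by
  rw [t2Space_iff_of_isOpenQuotientMap (QuotientGroup.isOpenQuotientMap_mk (N := GammaZ n))]
  have : {q : SLR n × SLR n | (q.1 : SLR n ⧸ GammaZ n) = q.2} =
      (fun q : SLR n × SLR n => q.1⁻¹ * q.2) ⁻¹' (GammaZ n) := by
    ext q; exact QuotientGroup.eq
  rw [this]
  exact (isClosed_GammaZ n).preimage (by fun_prop)

/-- Orbit maps `g ↦ g y` are open at the identity. -/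
lemma exists_smul_mem_of_nhds {n : ℕ} (y : SLR n ⧸ GammaZ n) (V : Set (SLR n)) (hV : V ∈ 𝓝 1) :
    (fun g : SLR n => g • y) '' V ∈ 𝓝 y := by
  induction y using QuotientGroup.induction_on with
  | H h =>
    have h1 : (fun g : SLR n => g * h) '' V ∈ 𝓝 h := by
      have := (Homeomorph.mulRight h).isOpenMap.image_mem_nhds hV
      simpa using this
    have := (QuotientGroup.isOpenMap_coe (N := GammaZ n)).image_mem_nhds h1
    rwa [Set.image_image] at this

/-! ### The groups `A`, `A_α` and `U_α` -/

/-- The exponential parametrisation `ℝⁿ → A`. The mean of `c` is subtracted so that the result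
has determinant one for every `c`. -/
noncomputable def dg {n : ℕ} (c : Fin n → ℝ) : SLR n :=
  ⟨diagonal fun p => Real.exp (c p - (∑ q, c q) / n), by
    rw [det_diagonal, ← Real.exp_sum, Real.exp_eq_one_iff, Finset.sum_sub_distrib]
    rcases n with _ | n
    · simp
    · simp; field_simp; ring⟩

lemma dg_val {n : ℕ} (c : Fin n → ℝ) :
    (dg c).1 = diagonal fun p => Real.exp (c p - (∑ q, c q) / n) := rfl

lemma dg_apply_self {n : ℕ} (c : Fin n → ℝ) (p : Fin n) :
    (dg c).1 p p = Real.exp (c p - (∑ q, c q) / n) := by simp [dg_val]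

lemma dg_add {n : ℕ} (c d : Fin n → ℝ) : dg (c + d) = dg c * dg d := by
  apply Subtype.ext
  rw [SLR.val_mul, dg_val, dg_val, dg_val, diagonal_mul_diagonal]
  congr 1
  ext p
  rw [← Real.exp_add]
  congr 1
  simp only [Pi.add_apply, Finset.sum_add_distrib]
  ring

lemma dg_zero {n : ℕ} : dg (0 : Fin n → ℝ) = 1 := by
  apply Subtype.ext
  rw [dg_val]
  simp

lemma dg_neg {n : ℕ} (c : Fin n → ℝ) : dg (-c) = (dg c)⁻¹ := by
  rw [eq_inv_iff_mul_eq_one, ← dg_add, neg_add_cancel, dg_zero]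

lemma dg_comm {n : ℕ} (c d : Fin n → ℝ) : dg c * dg d = dg d * dg c := by
  rw [← dg_add, ← dg_add, add_comm]

lemma continuous_dg {n : ℕ} : Continuous (dg : (Fin n → ℝ) → SLR n) := by
  rw [continuous_iff_continuousAt]
  intro c
  apply SLR.tendsto_of_entries
  intro p q
  have : Continuous fun c : Fin n → ℝ => (dg c).1 p q := by
    simp only [dg_val, diagonal_apply]
    split_ifs <;> fun_prop
  exact this.continuousAt

lemma dg_mem {n : ℕ} (c : Fin n → ℝ) : dg c ∈ posDiag n := by
  refine ⟨fun i j hij => ?_, fun i => ?_⟩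
  · rw [dg_val, diagonal_apply_ne _ hij]
  · rw [dg_apply_self]; positivity

lemma posDiag_prod {n : ℕ} {g : SLR n} (hg : g ∈ posDiag n) : ∏ p, g.1 p p = 1 := by
  have h := SLR.det_val g
  have : g.1 = diagonal fun p => g.1 p p := by
    ext p q
    by_cases hpq : p = q
    · subst hpq; simp
    · rw [hg.1 p q hpq, diagonal_apply_ne _ hpq]
  rw [this, det_diagonal] at h
  exact h

lemma exists_dg {n : ℕ} {g : SLR n} (hg : g ∈ posDiag n) :
    ∃ c : Fin n → ℝ, g = dg c ∧ ∀ p, c p = Real.log (g.1 p p) := by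
  refine ⟨fun p => Real.log (g.1 p p), ?_, fun p => rfl⟩
  apply SLR.ext'
  intro p q
  by_cases hpq : p = q
  · subst hpq
    rw [dg_apply_self, ← Real.log_prod (fun p _ => (hg.2 p).ne'), posDiag_prod hg]
    simp [Real.exp_log (hg.2 p)]
  · rw [hg.1 p q hpq, dg_val, diagonal_apply_ne _ hpq]

lemma posDiag_eq_range (n : ℕ) : posDiag n = Set.range (dg : (Fin n → ℝ) → SLR n) := by
  ext g
  constructor
  · intro hg
    obtain ⟨c, h, -⟩ := exists_dg hg
    exact ⟨c, h.symm⟩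
  · rintro ⟨c, rfl⟩; exact dg_mem c

lemma dg_mem_rootKer {n : ℕ} {i j : Fin n} {c : Fin n → ℝ} (h : c i = c j) :
    dg c ∈ rootKer n i j := ⟨dg_mem c, by rw [dg_apply_self, dg_apply_self, h]⟩

lemma rootKer_eq_image (n : ℕ) (i j : Fin n) :
    rootKer n i j = dg '' {c : Fin n → ℝ | c i = c j} := by
  ext g
  constructor
  · intro hg
    obtain ⟨c, h, h'⟩ := exists_dg hg.1
    exact ⟨c, by simp only [Set.mem_ofPred_eq, h', hg.2], h.symm⟩
  · rintro ⟨c, hc, rfl⟩; exact dg_mem_rootKer hc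

lemma rootKer_subset (n : ℕ) (i j : Fin n) : rootKer n i j ⊆ posDiag n := fun _ h => h.1

lemma dg_conj_apply {n : ℕ} (c : Fin n → ℝ) (g : SLR n) (p q : Fin n) :
    (dg c * g * (dg c)⁻¹).1 p q = Real.exp (c p - c q) * g.1 p q := by
  rw [← dg_neg, SLR.val_mul, SLR.val_mul, dg_val, dg_val, mul_diagonal, diagonal_mul,
    mul_right_comm, ← Real.exp_add]
  congr 2
  simp
  ring

lemma elemU_val {n : ℕ} {i j : Fin n} (hij : i ≠ j) (s : ℝ) (p q : Fin n) :
    (elemU n hij s).1 p q = (if p = q then 1 else 0) + if i = p ∧ j = q then s else 0 := by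
  change (1 + Matrix.single i j s : Matrix (Fin n) (Fin n) ℝ) p q = _
  rw [Matrix.add_apply, Matrix.one_apply, Matrix.single_apply]

lemma elemU_add {n : ℕ} {i j : Fin n} (hij : i ≠ j) (s t : ℝ) :
    elemU n hij (s + t) = elemU n hij s * elemU n hij t :=
  Subtype.ext (Matrix.transvection_mul_transvection_same i j hij s t).symm

lemma elemU_zero {n : ℕ} {i j : Fin n} (hij : i ≠ j) : elemU n hij 0 = 1 :=
  Subtype.ext (by simp [elemU, Matrix.transvection_zero])

lemma elemU_neg {n : ℕ} {i j : Fin n} (hij : i ≠ j) (s : ℝ) :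
    elemU n hij (-s) = (elemU n hij s)⁻¹ := by
  rw [eq_inv_iff_mul_eq_one, ← elemU_add, neg_add_cancel, elemU_zero]

lemma continuous_elemU {n : ℕ} {i j : Fin n} (hij : i ≠ j) : Continuous (elemU n hij) := by
  rw [continuous_iff_continuousAt]
  intro c
  apply SLR.tendsto_of_entries
  intro p q
  have : Continuous fun s : ℝ => (elemU n hij s).1 p q := by
    simp only [elemU_val]
    split_ifs <;> fun_prop
  exact this.continuousAt

lemma elemU_mulVec {n : ℕ} {i j : Fin n} (hij : i ≠ j) (s : ℝ) (w : Fin n → ℝ) :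
    ((elemU n hij s).1 *ᵥ w) i = w i + s * w j := by
  simp only [mulVec, dotProduct, elemU_val, add_mul, Finset.sum_add_distrib]
  simp

/-- `A` normalises `U_α`, acting on it through the character `α`. -/
lemma dg_mul_elemU {n : ℕ} {i j : Fin n} (hij : i ≠ j) (c : Fin n → ℝ) (s : ℝ) :
    dg c * elemU n hij s = elemU n hij (Real.exp (c i - c j) * s) * dg c := by
  rw [← mul_inv_eq_iff_eq_mul]
  apply SLR.ext'
  intro p q
  rw [dg_conj_apply, elemU_val, elemU_val]
  by_cases hpq : p = q
  · subst hpq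
    by_cases h : i = p ∧ j = p
    · exact absurd (h.1.trans h.2.symm) hij
    · simp [h]
  · by_cases h : i = p ∧ j = q
    · obtain ⟨rfl, rfl⟩ := h; simp [hpq]
    · simp [h, hpq]

lemma elemU_comm_dg {n : ℕ} {i j : Fin n} (hij : i ≠ j) {c : Fin n → ℝ} (hc : c i = c j) (s : ℝ) :
    dg c * elemU n hij s = elemU n hij s * dg c := by
  rw [dg_mul_elemU, hc]; simp

/-! ### Vectors in lattices with bounded `A`-orbit -/

lemma intVec_ne_zero {n : ℕ} {v : Fin n → ℤ} (hv : v ≠ 0) : ∃ p, 1 ≤ |intVec v p| := by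
  obtain ⟨p, hp⟩ := Function.ne_iff.1 hv
  refine ⟨p, ?_⟩
  have : (1 : ℤ) ≤ |v p| := Int.one_le_abs hp
  simp only [intVec]
  exact_mod_cast this

lemma map_mulVec_intVec {n : ℕ} (M : Matrix (Fin n) (Fin n) ℤ) (v : Fin n → ℤ) :
    M.map (Int.castRingHom ℝ) *ᵥ intVec v = intVec (M *ᵥ v) := by
  ext p
  simp [intVec, mulVec, dotProduct]

lemma mulVec_ne_zero_of_det {n : ℕ} {M : Matrix (Fin n) (Fin n) ℤ} (hM : M.det = 1)
    {v : Fin n → ℤ} (hv : v ≠ 0) : M *ᵥ v ≠ 0 := by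
  intro h
  apply hv
  exact Matrix.eq_zero_of_mulVec_eq_zero (by rw [hM]; exact one_ne_zero) h

/-- The easy half of Mahler's criterion: over a compact subset of `X`, nonzero lattice vectors are
bounded away from zero. -/
lemma lattice_lower_bound {n : ℕ} {Z : Set (SLR n ⧸ GammaZ n)} (hZ : IsCompact Z) :
    ∃ ε : ℝ, 0 < ε ∧ ∀ g : SLR n, (g : SLR n ⧸ GammaZ n) ∈ Z → ∀ v : Fin n → ℤ, v ≠ 0 →
      ∃ p, ε ≤ |(g.1 *ᵥ intVec v) p| := by
  let O : ℕ → Set (SLR n) := fun m => {h | ∀ p q, |(h⁻¹).1 p q| < m}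
  have hO : ∀ m, IsOpen (O m) := by
    intro m
    have : O m = ⋂ p, ⋂ q, {h : SLR n | |(h⁻¹).1 p q| < m} := by
      ext h; simp [O]
    rw [this]
    refine isOpen_iInter_of_finite fun p => isOpen_iInter_of_finite fun q => ?_
    exact isOpen_lt ((SLR.continuous_entry p q).comp continuous_inv).abs continuous_const
  obtain ⟨m, hm⟩ := hZ.elim_directed_cover
    (fun m => (QuotientGroup.mk : SLR n → SLR n ⧸ GammaZ n) '' O m)
    (fun m => QuotientGroup.isOpenMap_coe _ (hO m))
    (by
      intro x _
      induction x using QuotientGroup.induction_on with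
      | H h =>
        obtain ⟨m, hm⟩ := exists_nat_gt (∑ p, ∑ q, |(h⁻¹).1 p q|)
        refine Set.mem_iUnion.2 ⟨m, h, fun p q => lt_of_le_of_lt ?_ hm, rfl⟩
        calc |(h⁻¹).1 p q| ≤ ∑ q, |(h⁻¹).1 p q| :=
              Finset.single_le_sum (f := fun q => |(h⁻¹).1 p q|)
                (fun _ _ => abs_nonneg _) (Finset.mem_univ q)
          _ ≤ _ := Finset.single_le_sum (f := fun p => ∑ q, |(h⁻¹).1 p q|)
                (fun _ _ => Finset.sum_nonneg fun _ _ => abs_nonneg _) (Finset.mem_univ p))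
    (by
      intro a b
      refine ⟨max a b, ?_, ?_⟩
      · exact Set.image_mono fun h hh p q => (hh p q).trans_le (by exact_mod_cast le_max_left a b)
      · exact Set.image_mono fun h hh p q => (hh p q).trans_le (by exact_mod_cast le_max_right a b))
  refine ⟨1 / (n * m + 1), by positivity, fun g hg v hv => ?_⟩
  obtain ⟨h, hh, hhg⟩ := hm hg
  have hγ : h⁻¹ * g ∈ GammaZ n := QuotientGroup.eq.1 hhg
  obtain ⟨M, hM, hMg⟩ := (mem_GammaZ_iff _).1 hγ
  by_contra! hcon
  obtain ⟨p, hp⟩ := intVec_ne_zero (mulVec_ne_zero_of_det hM hv)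
  rw [← map_mulVec_intVec, ← hMg, SLR.val_mul, ← mulVec_mulVec] at hp
  have : |((h⁻¹).1 *ᵥ (g.1 *ᵥ intVec v)) p| ≤ ∑ q : Fin n, (m : ℝ) * (1 / (n * m + 1)) := by
    rw [mulVec, dotProduct]
    refine (Finset.abs_sum_le_sum_abs _ _).trans (Finset.sum_le_sum fun q _ => ?_)
    rw [abs_mul]
    exact mul_le_mul (hh p q).le (hcon q).le (abs_nonneg _) (by positivity)
  have h2 : ∑ q : Fin n, (m : ℝ) * (1 / (n * m + 1)) < 1 := by
    simp only [Finset.sum_const, Finset.card_univ, Fintype.card_fin, nsmul_eq_mul]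
    rw [← mul_assoc, mul_one_div, div_lt_one (by positivity)]
    linarith
  linarith

/-- A lattice whose `A`-orbit is bounded has no nonzero vector with a vanishing coordinate:
otherwise `A` would contract that vector to zero. -/
lemma coord_ne_zero {n : ℕ} {Z : Set (SLR n ⧸ GammaZ n)} (hZ : IsCompact Z)
    (hA : ∀ c : Fin n → ℝ, ∀ z ∈ Z, dg c • z ∈ Z) {g : SLR n}
    (hg : (g : SLR n ⧸ GammaZ n) ∈ Z) {v : Fin n → ℤ} (hv : v ≠ 0) (i : Fin n) :
    (g.1 *ᵥ intVec v) i ≠ 0 := by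
  intro h0
  obtain ⟨ε, hε, H⟩ := lattice_lower_bound hZ
  set w := g.1 *ᵥ intVec v with hw
  have hn : (0 : ℝ) < n := by exact_mod_cast i.pos
  set C : ℝ := ∑ p, |w p| with hC
  have hC0 : 0 ≤ C := Finset.sum_nonneg fun _ _ => abs_nonneg _
  -- `s` is chosen so that `exp (-s / n) = ε / (C + 1)`
  set s : ℝ := -(n * Real.log (ε / (C + 1))) with hs
  let c : Fin n → ℝ := Pi.single i s
  obtain ⟨p, hp⟩ := H (dg c * g) (hA c _ hg) v hv
  have hsum : (∑ q, c q) = s := by simp [c]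
  have hval : ((dg c * g).1 *ᵥ intVec v) p = Real.exp (c p - s / n) * w p := by
    rw [SLR.val_mul, ← mulVec_mulVec, ← hw, dg_val, mulVec_diagonal, hsum]
  rw [hval] at hp
  by_cases hpi : p = i
  · rw [hpi, h0] at hp; simp at hp; linarith
  · have hcp : c p = 0 := by simp [c, hpi]
    have : Real.exp (c p - s / n) = ε / (C + 1) := by
      rw [hcp, hs]
      have : 0 - -(n * Real.log (ε / (C + 1))) / n = Real.log (ε / (C + 1)) := by
        field_simp; ring
      rw [this, Real.exp_log (by positivity)]
    rw [this, abs_mul, abs_of_pos (by positivity : 0 < ε / (C + 1)), div_mul_eq_mul_div,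
      le_div_iff₀ (by positivity)] at hp
    have h1 : |w p| ≤ C := Finset.single_le_sum (f := fun p => |w p|)
      (fun _ _ => abs_nonneg _) (Finset.mem_univ p)
    nlinarith

/-- Rational directions are dense. -/
lemma exists_intVec_mem {n : ℕ} {U : Set (Fin n → ℝ)} (hU : IsOpen U) {x : Fin n → ℝ}
    (hx : x ∈ U) : ∃ (v : Fin n → ℤ) (N : ℝ), 0 < N ∧ N⁻¹ • intVec v ∈ U := by
  have ht : Tendsto (fun N : ℝ => N⁻¹ • intVec fun p => ⌊N * x p⌋) atTop (𝓝 x) := by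
    refine tendsto_pi_nhds.2 fun p => ?_
    have h1 : Tendsto (fun N : ℝ => x p - N⁻¹) atTop (𝓝 (x p)) := by
      simpa using tendsto_const_nhds.sub (tendsto_inv_atTop_zero (𝕜 := ℝ))
    refine tendsto_of_tendsto_of_tendsto_of_le_of_le' h1 tendsto_const_nhds ?_ ?_
    · filter_upwards [eventually_gt_atTop 0] with N hN
      simp only [Pi.smul_apply, intVec, smul_eq_mul]
      have := (Int.sub_one_lt_floor (N * x p)).le
      rw [inv_mul_eq_div, le_div_iff₀ hN]
      have h2 : (x p - N⁻¹) * N = N * x p - 1 := by field_simp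
      linarith
    · filter_upwards [eventually_gt_atTop 0] with N hN
      simp only [Pi.smul_apply, intVec, smul_eq_mul]
      have := Int.floor_le (N * x p)
      rw [inv_mul_eq_div, div_le_iff₀ hN]
      linarith
  obtain ⟨N, hN, hN0⟩ := ((ht.eventually (hU.mem_nhds hx)).and (eventually_gt_atTop 0)).exists
  exact ⟨_, N, hN0, hN⟩

/-- A compact `A`-invariant set contains no half-orbit of a root group: for some `t` of either
prescribed sign, `u_α(t)` makes a coordinate of some lattice vector vanish. -/
lemma no_half_orbit {n : ℕ} {Z : Set (SLR n ⧸ GammaZ n)} (hZ : IsCompact Z)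
    (hA : ∀ c : Fin n → ℝ, ∀ z ∈ Z, dg c • z ∈ Z) {i j : Fin n} (hij : i ≠ j)
    (y : SLR n ⧸ GammaZ n) (s : ℝ) (hs : s ≠ 0)
    (H : ∀ t : ℝ, 0 < t → elemU n hij (t * s) • y ∈ Z) : False := by
  induction y using QuotientGroup.induction_on with
  | H g =>
    let U : Set (Fin n → ℝ) := {x | 0 < (g.1 *ᵥ x) j ∧ 0 < -s * (g.1 *ᵥ x) i}
    have hcont : ∀ p, Continuous fun x : Fin n → ℝ => (g.1 *ᵥ x) p := fun p =>
      (continuous_apply p).comp (Continuous.matrix_mulVec continuous_const continuous_id)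
    have hU : IsOpen U := (isOpen_lt continuous_const (hcont j)).inter
      (isOpen_lt continuous_const (continuous_const.mul (hcont i)))
    have hx : ((g⁻¹).1 *ᵥ (Pi.single j 1 + Pi.single i (-s))) ∈ U := by
      have : g.1 *ᵥ ((g⁻¹).1 *ᵥ (Pi.single j 1 + Pi.single i (-s))) =
          Pi.single j 1 + Pi.single i (-s) := by
        rw [mulVec_mulVec, SLR.mul_inv_val, one_mulVec]
      have hs2 : 0 < s * s := mul_self_pos.2 hs
      simp only [U, Set.mem_ofPred_eq, this]
      simp [hij, hij.symm, hs2]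
    obtain ⟨v, N, hN, hv⟩ := exists_intVec_mem hU hx
    simp only [U, Set.mem_ofPred_eq, mulVec_smul, Pi.smul_apply, smul_eq_mul] at hv
    set w := g.1 *ᵥ intVec v with hw
    have hwj : 0 < w j := by
      have := mul_pos hN hv.1
      rwa [mul_inv_cancel_left₀ hN.ne'] at this
    have hwi : 0 < -s * w i := by
      have := mul_pos hN hv.2
      rwa [mul_left_comm, mul_inv_cancel_left₀ hN.ne'] at this
    have hv0 : v ≠ 0 := by
      rintro rfl
      have : intVec (0 : Fin n → ℤ) = 0 := by ext; simp [intVec]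
      rw [hw, this, mulVec_zero] at hwj
      simp at hwj
    have ht : 0 < -(w i) / (w j) / s := by
      have : -(w i) / (w j) / s = (-s * w i) / (w j * (s * s)) := by field_simp
      rw [this]
      have hs2 : 0 < s * s := mul_self_pos.2 hs
      positivity
    have hmem := H _ ht
    rw [div_mul_cancel₀ _ hs] at hmem
    refine coord_ne_zero hZ hA (g := elemU n hij (-(w i) / w j) * g) hmem hv0 i ?_
    rw [SLR.val_mul, ← mulVec_mulVec, ← hw, elemU_mulVec]
    field_simp
    ring

/-! ### Isolating a root -/

lemma exists_limit {n : ℕ} {ι : Type*} (u : Ultrafilter ι) {Y : Set (SLR n ⧸ GammaZ n)}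
    (hY : IsCompact Y) {z : ι → SLR n ⧸ GammaZ n} (hz : ∀ k, z k ∈ Y) :
    ∃ y ∈ Y, Tendsto z u (𝓝 y) := by
  obtain ⟨y, hy, h⟩ := hY.ultrafilter_le_nhds (u.map z)
    (by
      rw [le_principal_iff]
      exact (Eventually.of_forall hz : ∀ᶠ k in (u : Filter ι), z k ∈ Y))
  exact ⟨y, hy, h⟩

lemma smul_limit_mem {n : ℕ} {ι : Type*} {u : Filter ι} [u.NeBot] {Z : Set (SLR n ⧸ GammaZ n)}
    (hZ : IsCompact Z) {z : ι → SLR n ⧸ GammaZ n} {y : SLR n ⧸ GammaZ n}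
    (hz : Tendsto z u (𝓝 y)) {f : ι → SLR n} {h : SLR n} (hf : Tendsto f u (𝓝 h))
    (H : ∀ᶠ k in u, f k • z k ∈ Z) : h • y ∈ Z :=
  hZ.isClosed.mem_of_tendsto (hf.smul hz) H

/-- Conjugating elements `g → 1` of `G` outside `A` by suitable elements of the one-parameter
group `exp(s ℓ)` makes them converge to a nontrivial unipotent element that is triangular with
respect to the ordering of the indices by the weights `ℓ`. -/
lemma blow_up {n : ℕ} {Y Z : Set (SLR n ⧸ GammaZ n)} (hY : IsCompact Y) (hZ : IsCompact Z)
    (hYA : ∀ c : Fin n → ℝ, ∀ z ∈ Y, dg c • z ∈ Y)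
    (hZA : ∀ c : Fin n → ℝ, ∀ z ∈ Z, dg c • z ∈ Z)
    {y : SLR n ⧸ GammaZ n} (hy : y ∈ Y) (ℓ : Fin n → ℝ)
    (u : Ultrafilter (SLR n)) (hu : (u : Filter (SLR n)) ≤ 𝓝 1)
    (H : ∀ᶠ g in (u : Filter (SLR n)), g • y ∈ Z ∧ ∃ p q, ℓ q < ℓ p ∧ g.1 p q ≠ 0) :
    ∃ h : SLR n, ∃ y' ∈ Y, h • y' ∈ Z ∧ (∀ p, h.1 p p = 1) ∧
      (∀ p q, ℓ p < ℓ q → h.1 p q = 0) ∧ ∃ p q, p ≠ q ∧ h.1 p q ≠ 0 := by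
  -- the size of the off-diagonal part of `exp(s ℓ) g exp(-s ℓ)`
  let φ : SLR n → ℝ → ℝ := fun g s =>
    ∑ p, ∑ q, if p = q then 0 else |Real.exp (s * (ℓ p - ℓ q)) * g.1 p q|
  have hterm : ∀ g s p q, p ≠ q → |Real.exp (s * (ℓ p - ℓ q)) * g.1 p q| ≤ φ g s := by
    intro g s p q hpq
    have h0 : ∀ p q : Fin n,
        0 ≤ if p = q then 0 else |Real.exp (s * (ℓ p - ℓ q)) * g.1 p q| := by
      intro p q; split_ifs; exacts [le_rfl, abs_nonneg _]
    calc |Real.exp (s * (ℓ p - ℓ q)) * g.1 p q|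
        = if p = q then 0 else |Real.exp (s * (ℓ p - ℓ q)) * g.1 p q| := by rw [if_neg hpq]
      _ ≤ ∑ q, if p = q then 0 else |Real.exp (s * (ℓ p - ℓ q)) * g.1 p q| :=
          Finset.single_le_sum (f := fun q =>
            if p = q then 0 else |Real.exp (s * (ℓ p - ℓ q)) * g.1 p q|)
            (fun _ _ => h0 _ _) (Finset.mem_univ q)
      _ ≤ φ g s := Finset.single_le_sum (f := fun p => ∑ q,
            if p = q then 0 else |Real.exp (s * (ℓ p - ℓ q)) * g.1 p q|)
            (fun _ _ => Finset.sum_nonneg fun _ _ => h0 _ _) (Finset.mem_univ p)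
  have hφs : ∀ g, Continuous (φ g) := by
    intro g
    refine continuous_finsetSum _ fun p _ => continuous_finsetSum _ fun q _ => ?_
    split_ifs <;> fun_prop
  have hφ0 : ∀ᶠ g in (u : Filter (SLR n)), φ g 0 < 1 := by
    have hc : Continuous fun g => φ g 0 := by
      refine continuous_finsetSum _ fun p _ => continuous_finsetSum _ fun q _ => ?_
      split_ifs
      · exact continuous_const
      · exact (continuous_const.mul (SLR.continuous_entry p q)).abs
    have h1 : φ 1 0 = 0 := by
      refine Finset.sum_eq_zero fun p _ => Finset.sum_eq_zero fun q _ => ?_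
      split_ifs with hpq
      · rfl
      · have : (1 : SLR n).1 p q = 0 := by
          change (1 : Matrix (Fin n) (Fin n) ℝ) p q = 0
          rw [one_apply_ne hpq]
        rw [this]; simp
    have := hc.tendsto 1
    rw [h1] at this
    exact (this.mono_left hu).eventually (gt_mem_nhds one_pos)
  have hex : ∀ g : SLR n, ∃ s : ℝ, (φ g 0 < 1 ∧ ∃ p q, ℓ q < ℓ p ∧ g.1 p q ≠ 0) →
      0 ≤ s ∧ φ g s = 1 := by
    intro g
    by_cases hg : φ g 0 < 1 ∧ ∃ p q, ℓ q < ℓ p ∧ g.1 p q ≠ 0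
    · obtain ⟨hg0, p, q, hpq, hne⟩ := hg
      have hpq' : p ≠ q := by rintro rfl; exact lt_irrefl _ hpq
      have hsmall : |g.1 p q| < 1 := by
        have := hterm g 0 p q hpq'
        simp only [zero_mul, Real.exp_zero, one_mul] at this
        linarith
      have hpos : 0 < |g.1 p q| := abs_pos.2 hne
      set s := -Real.log |g.1 p q| / (ℓ p - ℓ q) with hs
      have hlog : Real.log |g.1 p q| < 0 := Real.log_neg hpos hsmall
      have hs0 : 0 ≤ s := div_nonneg (by linarith) (by linarith)
      have h1 : 1 ≤ φ g s := by
        refine le_trans (le_of_eq ?_) (hterm g s p q hpq')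
        rw [hs, div_mul_cancel₀ _ (sub_pos.2 hpq).ne', Real.exp_neg, Real.exp_log hpos, abs_mul,
          abs_inv, abs_abs, inv_mul_cancel₀ hpos.ne']
      obtain ⟨r, hr, hr1⟩ := intermediate_value_Icc hs0 (hφs g).continuousOn
        (show (1 : ℝ) ∈ Set.Icc (φ g 0) (φ g s) from ⟨hg0.le, h1⟩)
      exact ⟨r, fun _ => ⟨hr.1, hr1⟩⟩
    · exact ⟨0, fun h => absurd h hg⟩
  choose σ hσ using hex
  let f : SLR n → SLR n := fun g => dg (σ g • ℓ) * g * (dg (σ g • ℓ))⁻¹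
  have hf : ∀ g p q, (f g).1 p q = Real.exp (σ g * (ℓ p - ℓ q)) * g.1 p q := by
    intro g p q
    rw [dg_conj_apply]
    simp [mul_sub]
  have hgood : ∀ᶠ g in (u : Filter (SLR n)), 0 ≤ σ g ∧ φ g (σ g) = 1 := by
    filter_upwards [H, hφ0] with g h1 h2 using hσ g ⟨h2, h1.2⟩
  have hentry : ∀ p q, Tendsto (fun g : SLR n => g.1 p q) u (𝓝 ((1 : SLR n).1 p q)) :=
    fun p q => ((SLR.continuous_entry p q).tendsto 1).mono_left hu
  have hone : ∀ p, (1 : SLR n).1 p p = 1 := fun p => one_apply_eq (α := ℝ) p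
  have hdiag : ∀ p, Tendsto (fun g => (f g).1 p p) u (𝓝 1) := by
    intro p
    have := hentry p p
    rw [hone] at this
    simpa [hf] using this
  let K : Set (Matrix (Fin n) (Fin n) ℝ) :=
    Set.univ.pi fun _ => Set.univ.pi fun _ => Set.Icc (-2 : ℝ) 2
  have hK : IsCompact K := isCompact_univ_pi fun _ => isCompact_univ_pi fun _ => isCompact_Icc
  have hK' := (SLR.isClosedEmbedding_val n).isCompact_preimage hK
  have hfK : ∀ᶠ g in (u : Filter (SLR n)), f g ∈ (Subtype.val ⁻¹' K : Set (SLR n)) := by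
    have hd : ∀ᶠ g in (u : Filter (SLR n)), ∀ p, (f g).1 p p ∈ Set.Icc (-2 : ℝ) 2 :=
      eventually_all.2 fun p => (hdiag p).eventually (Icc_mem_nhds (by norm_num) (by norm_num))
    filter_upwards [hd, hgood] with g h1 h2
    intro p _ q _
    by_cases hpq : p = q
    · subst hpq; exact h1 p
    · have h3 := hterm g (σ g) p q hpq
      rw [← hf, h2.2] at h3
      exact abs_le.1 (h3.trans one_le_two)
  obtain ⟨h, -, hh⟩ := hK'.ultrafilter_le_nhds (u.map f)
    (by rw [le_principal_iff]; exact hfK)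
  have hfh : Tendsto f u (𝓝 h) := hh
  obtain ⟨y', hy', hyt⟩ := exists_limit u hY (z := fun g => dg (σ g • ℓ) • y)
    (fun g => hYA _ _ hy)
  have hlim : ∀ p q, Tendsto (fun g => (f g).1 p q) u (𝓝 (h.1 p q)) := fun p q =>
    ((SLR.continuous_entry p q).tendsto h).comp hfh
  refine ⟨h, y', hy', smul_limit_mem hZ hyt hfh ?_, ?_, ?_, ?_⟩
  · filter_upwards [H] with g hg
    have : f g • dg (σ g • ℓ) • y = dg (σ g • ℓ) • g • y := by
      simp only [f, smul_smul, inv_mul_cancel_right]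
    rw [this]
    exact hZA _ _ hg.1
  · exact fun p => tendsto_nhds_unique (hlim p p) (hdiag p)
  · intro p q hpq
    have hpq' : p ≠ q := by rintro rfl; exact lt_irrefl _ hpq
    refine tendsto_nhds_unique (hlim p q) (squeeze_zero_norm' ?_ ?_ (a := fun g => |g.1 p q|))
    · filter_upwards [hgood] with g hg
      rw [hf, Real.norm_eq_abs, abs_mul, Real.abs_exp]
      refine mul_le_of_le_one_left (abs_nonneg _) (Real.exp_le_one_iff.2 ?_)
      exact mul_nonpos_of_nonneg_of_nonpos hg.1 (by linarith)
    · have := (hentry p q).abs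
      have h0 : (1 : SLR n).1 p q = 0 := one_apply_ne (α := ℝ) hpq'
      rwa [h0, abs_zero] at this
  · by_contra! hcon
    have h1 : Tendsto (fun g => φ g (σ g)) u (𝓝 0) := by
      have : (0 : ℝ) = ∑ p : Fin n, ∑ q : Fin n, 0 := by simp
      rw [this]
      refine tendsto_finsetSum _ fun p _ => tendsto_finsetSum _ fun q _ => ?_
      split_ifs with hpq
      · exact tendsto_const_nhds
      · have := (hlim p q).abs
        rw [hcon p q hpq, abs_zero] at this
        simpa only [hf] using this
    have h2 : Tendsto (fun g => φ g (σ g)) u (𝓝 1) :=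
      tendsto_const_nhds.congr' (by filter_upwards [hgood] with g hg using hg.2.symm)
    exact zero_ne_one (tendsto_nhds_unique h1 h2)

/-- Contracting by a one-parameter subgroup of `A_α`, for a root `α` spanning an extremal ray of
the cone generated by the support of a triangular unipotent `h`, retains only the `α`-entry. -/
lemma extract_root {n : ℕ} {Y Z : Set (SLR n ⧸ GammaZ n)} (hY : IsCompact Y) (hZ : IsCompact Z)
    (hYA : ∀ c : Fin n → ℝ, ∀ z ∈ Y, dg c • z ∈ Y)
    (hZA : ∀ c : Fin n → ℝ, ∀ z ∈ Z, dg c • z ∈ Z)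
    (ℓ : Fin n → ℝ) (hℓ : Function.Injective ℓ) (h : SLR n)
    {y : SLR n ⧸ GammaZ n} (hy : y ∈ Y) (hhy : h • y ∈ Z) (hd : ∀ p, h.1 p p = 1)
    (ht : ∀ p q, ℓ p < ℓ q → h.1 p q = 0) (hne : ∃ p q, p ≠ q ∧ h.1 p q ≠ 0) :
    ∃ (i j : Fin n) (hij : i ≠ j) (s : ℝ), s ≠ 0 ∧ ∃ y' ∈ Y, elemU n hij s • y' ∈ Z := by
  have hlt : ∀ p q, p ≠ q → h.1 p q ≠ 0 → ℓ q < ℓ p := fun p q hpq h0 =>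
    lt_of_le_of_ne (not_lt.1 fun hl => h0 (ht p q hl)) fun he => hpq (hℓ he.symm)
  obtain ⟨⟨i, j⟩, ⟨hij, h0⟩, hmin⟩ := Set.exists_min_image
    {x : Fin n × Fin n | x.1 ≠ x.2 ∧ h.1 x.1 x.2 ≠ 0} (fun x => ℓ x.1 - ℓ x.2)
    (Set.toFinite _) (by obtain ⟨p, q, hpq⟩ := hne; exact ⟨(p, q), hpq⟩)
  dsimp only at hij h0 hmin
  have hji := hlt i j hij h0
  -- the weights `ℓ`, with the interval `[ℓ j, ℓ i]` collapsed to a point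
  let κ : ℝ → ℝ := fun x => min x (ℓ j) + max (x - ℓ i) 0
  let c : Fin n → ℝ := fun p => -κ (ℓ p)
  have hc : ∀ p q, p ≠ q → h.1 p q ≠ 0 → ¬ (p = i ∧ q = j) → c p - c q < 0 := by
    intro p q hpq hp0 hnot
    have h1 := hlt p q hpq hp0
    have h2 := hmin (p, q) ⟨hpq, hp0⟩
    dsimp only at h2
    by_contra hcon
    have h3 : κ (ℓ p) ≤ κ (ℓ q) := by simp only [c] at hcon; linarith
    have h4 : min (ℓ q) (ℓ j) ≤ min (ℓ p) (ℓ j) := min_le_min_right _ h1.le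
    have h5 : max (ℓ q - ℓ i) 0 ≤ max (ℓ p - ℓ i) 0 := max_le_max_right _ (by linarith)
    simp only [κ] at h3
    have h6 : min (ℓ q) (ℓ j) = min (ℓ p) (ℓ j) := by linarith
    have h7 : max (ℓ q - ℓ i) 0 = max (ℓ p - ℓ i) 0 := by linarith
    have h8 : ℓ j ≤ ℓ q := by
      by_contra hlt'
      rw [not_le] at hlt'
      rw [min_eq_left hlt'.le] at h6
      have : ℓ q < min (ℓ p) (ℓ j) := lt_min h1 hlt'
      linarith
    have h9 : ℓ p ≤ ℓ i := by
      by_contra hlt'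
      rw [not_le] at hlt'
      have : max (ℓ q - ℓ i) 0 < ℓ p - ℓ i := max_lt (by linarith) (by linarith)
      have := le_max_left (ℓ p - ℓ i) 0
      linarith
    exact hnot ⟨hℓ (by linarith), hℓ (by linarith)⟩
  have hcij : c i = c j := by simp [c, κ, hji.le]
  let u : Ultrafilter ℝ := Ultrafilter.of atTop
  have hu : (u : Filter ℝ) ≤ atTop := Ultrafilter.of_le _
  obtain ⟨y', hy', hyt⟩ := exists_limit u hY (z := fun r : ℝ => dg (r • c) • y)
    (fun r => hYA _ _ hy)
  refine ⟨i, j, hij, h.1 i j, h0, y', hy', ?_⟩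
  refine smul_limit_mem hZ hyt (f := fun r : ℝ => dg (r • c) * h * (dg (r • c))⁻¹) ?_ ?_
  · refine SLR.tendsto_of_entries fun p q => ?_
    have he : ∀ r : ℝ, (dg (r • c) * h * (dg (r • c))⁻¹).1 p q =
        Real.exp (r * (c p - c q)) * h.1 p q := by
      intro r; rw [dg_conj_apply]; simp [mul_sub]
    simp only [he, elemU_val]
    by_cases hpq : p = q
    · subst hpq
      have : ¬ (i = p ∧ j = p) := fun h => hij (h.1.trans h.2.symm)
      simp [hd, this]
    · by_cases hpi : p = i ∧ q = j
      · obtain ⟨rfl, rfl⟩ := hpi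
        simp [hcij, hij]
      · have hpi' : ¬ (i = p ∧ j = q) := fun h => hpi ⟨h.1.symm, h.2.symm⟩
        simp only [hpq, hpi', if_false, add_zero]
        by_cases hp0 : h.1 p q = 0
        · simp [hp0]
        · have hneg := hc p q hpq hp0 hpi
          have h1 : Tendsto (fun r : ℝ => r * (c p - c q)) u atBot :=
            (tendsto_id.atTop_mul_const_of_neg hneg).mono_left hu
          simpa using (Real.tendsto_exp_atBot.comp h1).mul_const (h.1 p q)
  · refine Eventually.of_forall fun r => ?_
    have : (dg (r • c) * h * (dg (r • c))⁻¹) • dg (r • c) • y = dg (r • c) • h • y := by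
      simp only [smul_smul, inv_mul_cancel_right]
    rw [this]
    exact hZA _ _ hhy

/-- If `y ∈ Y` is approached inside `Z` transversally to its `A`-orbit, then some nontrivial
element of a root group moves a point of `Y` into `Z`. -/
lemma isolate_root {n : ℕ} {Y Z : Set (SLR n ⧸ GammaZ n)} (hY : IsCompact Y) (hZ : IsCompact Z)
    (hYA : ∀ c : Fin n → ℝ, ∀ z ∈ Y, dg c • z ∈ Y)
    (hZA : ∀ c : Fin n → ℝ, ∀ z ∈ Z, dg c • z ∈ Z)
    {y : SLR n ⧸ GammaZ n} (hy : y ∈ Y)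
    (H : ∀ V ∈ 𝓝 (1 : SLR n), ∃ g ∈ V, g ∉ posDiag n ∧ g • y ∈ Z) :
    ∃ (i j : Fin n) (hij : i ≠ j) (s : ℝ), s ≠ 0 ∧ ∃ y' ∈ Y, elemU n hij s • y' ∈ Z := by
  let F : Filter (SLR n) := 𝓝 1 ⊓ 𝓟 {g | g ∉ posDiag n ∧ g • y ∈ Z}
  have hF : F.NeBot := by
    rw [inf_principal_neBot_iff]
    intro V hV
    obtain ⟨g, hg, h⟩ := H V hV
    exact ⟨g, hg, h⟩
  let u : Ultrafilter (SLR n) := Ultrafilter.of F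
  have huF : (u : Filter (SLR n)) ≤ F := Ultrafilter.of_le F
  have hu : (u : Filter (SLR n)) ≤ 𝓝 1 := huF.trans inf_le_left
  have hS : ∀ᶠ g in (u : Filter (SLR n)), g ∉ posDiag n ∧ g • y ∈ Z :=
    le_principal_iff.1 (huF.trans inf_le_right)
  have hpos : ∀ᶠ g in (u : Filter (SLR n)), ∀ p, 0 < g.1 p p := by
    refine eventually_all.2 fun p => ?_
    have := ((SLR.continuous_entry p p).tendsto 1).mono_left hu
    rw [show (1 : SLR n).1 p p = 1 from one_apply_eq (α := ℝ) p] at this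
    exact this.eventually (lt_mem_nhds one_pos)
  have hcase : ∀ᶠ g in (u : Filter (SLR n)), (∃ p q : Fin n, q < p ∧ g.1 p q ≠ 0) ∨
      (∃ p q : Fin n, p < q ∧ g.1 p q ≠ 0) := by
    filter_upwards [hS, hpos] with g h1 h2
    by_contra! hcon
    refine h1.1 ⟨fun p q hpq => ?_, h2⟩
    rcases lt_or_gt_of_ne hpq with h | h
    exacts [hcon.2 p q h, hcon.1 p q h]
  -- the lower triangular part is expanded by increasing weights, the upper one by decreasing ones
  suffices ∃ ℓ : Fin n → ℝ, Function.Injective ℓ ∧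
      ∀ᶠ g in (u : Filter (SLR n)), ∃ p q, ℓ q < ℓ p ∧ g.1 p q ≠ 0 by
    obtain ⟨ℓ, hℓ, hev⟩ := this
    obtain ⟨h, y', hy', hhy, hd, ht, hne⟩ := blow_up hY hZ hYA hZA hy ℓ u hu
      (by filter_upwards [hS, hev] with g h1 h2 using ⟨h1.2, h2⟩)
    exact extract_root hY hZ hYA hZA ℓ hℓ h hy' hhy hd ht hne
  rcases Ultrafilter.eventually_or.1 hcase with h | h
  · refine ⟨fun p => (p : ℝ), fun p q hpq => Fin.ext (Nat.cast_injective hpq), ?_⟩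
    filter_upwards [h] with g hg
    obtain ⟨p, q, hpq, h0⟩ := hg
    exact ⟨p, q, by exact_mod_cast hpq, h0⟩
  · refine ⟨fun p => -(p : ℝ), fun p q hpq => Fin.ext (Nat.cast_injective (neg_injective hpq)), ?_⟩
    filter_upwards [h] with g hg
    obtain ⟨p, q, hpq, h0⟩ := hg
    exact ⟨p, q, neg_lt_neg (by exact_mod_cast hpq), h0⟩

/-! ### Compact `A`-orbits -/

open Polynomial in
lemma mul_aeval_of_semiconj {n : ℕ} {g A D : Matrix (Fin n) (Fin n) ℝ} (h : g * A = D * g)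
    (Q : ℤ[X]) : g * aeval A Q = aeval D Q * g := by
  induction Q using Polynomial.induction_on' with
  | add p q hp hq => rw [map_add, map_add, mul_add, add_mul, hp, hq]
  | monomial k a =>
    have hk : g * A ^ k = D ^ k * g := (SemiconjBy.pow_right (show SemiconjBy g A D from h) k)
    rw [aeval_monomial, aeval_monomial, ← mul_assoc, ← Algebra.commutes, mul_assoc, mul_assoc, hk]

open Polynomial in
lemma aeval_diagonal_apply {n : ℕ} (d : Fin n → ℝ) (Q : ℤ[X]) :
    aeval (diagonal d) Q = diagonal fun p => aeval (d p) Q := by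
  have h1 := aeval_algHom_apply (Matrix.diagonalAlgHom (n := Fin n) (α := ℝ) ℤ) d Q
  rw [diagonalAlgHom_apply, diagonalAlgHom_apply] at h1
  rw [h1]
  congr 1
  ext p
  exact (aeval_algHom_apply (Pi.evalAlgHom ℤ (fun _ : Fin n => ℝ) p) d Q).symm

open Polynomial in
/-- An integral polynomial with a simple real root `y` and a multiple real root `x` has an integral
factor (up to scaling, its gcd with its derivative) that vanishes at `x` but not at `y`. -/
lemma exists_poly_separating (χ : ℤ[X]) {x y : ℝ} (hx : aeval x χ = 0)
    (hx' : aeval x (derivative χ) = 0) (hy' : aeval y (derivative χ) ≠ 0) :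
    ∃ Q : ℤ[X], aeval x Q = 0 ∧ aeval y Q ≠ 0 := by
  set P : ℚ[X] := χ.map (algebraMap ℤ ℚ) with hP
  have hev : ∀ (z : ℝ) (T : ℤ[X]), aeval z (T.map (algebraMap ℤ ℚ)) = aeval z T := fun z T =>
    aeval_map_algebraMap ℚ z T
  have hder : derivative P = (derivative χ).map (algebraMap ℤ ℚ) := derivative_map _ _
  let q : ℚ[X] := EuclideanDomain.gcd P (derivative P)
  have hq : aeval x q = 0 := by
    have := EuclideanDomain.gcd_eq_gcd_ab P (derivative P)
    simp only [q]
    rw [this, map_add, map_mul, map_mul, hder, hP, hev, hev, hx, hx', zero_mul, zero_mul, add_zero]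
  have hq' : aeval y q ≠ 0 := by
    intro h0
    obtain ⟨r, hr⟩ : q ∣ derivative P := EuclideanDomain.gcd_dvd_right _ _
    apply hy'
    rw [← hev, ← hder, hr, map_mul, h0, zero_mul]
  obtain ⟨b, hbM, hb⟩ := IsLocalization.integerNormalization_spec (nonZeroDivisors ℤ) q
  have hb' : ∀ z : ℝ, aeval z (IsLocalization.integerNormalization (nonZeroDivisors ℤ) q) =
      (b : ℝ) * aeval z q := by
    intro z
    rw [← hev, hb, map_zsmul, zsmul_eq_mul]
  refine ⟨_, by rw [hb', hq, mul_zero], ?_⟩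
  rw [hb']
  exact mul_ne_zero (by exact_mod_cast nonZeroDivisors.ne_zero hbM) hq'

open Polynomial in
/-- An element of `A` stabilising a lattice with bounded `A`-orbit cannot have both a multiple and a
simple eigenvalue: a suitable integral polynomial in it would be nonzero and
singular, producing a nonzero lattice vector with a vanishing coordinate. -/
lemma no_simple_eigenvalue {n : ℕ} {Z : Set (SLR n ⧸ GammaZ n)} (hZ : IsCompact Z)
    (hA : ∀ c : Fin n → ℝ, ∀ z ∈ Z, dg c • z ∈ Z) {y : SLR n ⧸ GammaZ n} (hy : y ∈ Z)
    {c : Fin n → ℝ} (hc : dg c • y = y) {i j l : Fin n} (hij : i ≠ j) (hcij : c i = c j)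
    (hl : ∀ p, p ≠ l → c p ≠ c l) : False := by
  induction y using QuotientGroup.induction_on with
  | H g =>
    have hγ : g⁻¹ * (dg c * g) ∈ GammaZ n := QuotientGroup.eq.1 hc.symm
    obtain ⟨M, -, hM⟩ := (mem_GammaZ_iff _).1 hγ
    set d : Fin n → ℝ := fun p => Real.exp (c p - (∑ q, c q) / n) with hd
    have hdd : (dg c).1 = diagonal d := rfl
    have hdij : d i = d j := by simp only [hd, hcij]
    have hdl : ∀ p, p ≠ l → d l - d p ≠ 0 := by
      intro p hp h
      have : d l = d p := sub_eq_zero.1 h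
      simp only [hd, Real.exp_eq_exp, sub_left_inj] at this
      exact hl p hp this.symm
    have hsemi : g.1 * M.map (Int.castRingHom ℝ) = diagonal d * g.1 := by
      rw [← hM, ← hdd, ← SLR.val_mul, ← SLR.val_mul, mul_inv_cancel_left]
    have hchar : M.charpoly.map (Int.castRingHom ℝ) = ∏ p, (X - C (d p)) := by
      rw [← charpoly_map, ← hM, ← charpoly_diagonal, ← hdd]
      rw [SLR.val_mul, charpoly_mul_comm, SLR.val_mul, mul_assoc, SLR.mul_inv_val, mul_one]
    have hev : ∀ (z : ℝ) (T : ℤ[X]), aeval z T = (T.map (Int.castRingHom ℝ)).eval z := by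
      intro z T
      rw [eval_map]; rfl
    have hprod : ∀ z, aeval z (derivative M.charpoly) =
        ∑ p, ∏ q ∈ Finset.univ.erase p, (z - d q) := by
      intro z
      rw [hev, ← derivative_map, hchar, derivative_prod_finset, eval_finsetSum]
      refine Finset.sum_congr rfl fun p _ => ?_
      simp [eval_prod]
    obtain ⟨Q, hQ0, hQ1⟩ := exists_poly_separating M.charpoly (x := d i) (y := d l)
      (by
        rw [hev, hchar, eval_prod]
        exact Finset.prod_eq_zero (Finset.mem_univ i) (by simp))
      (by
        rw [hprod]
        refine Finset.sum_eq_zero fun p _ => ?_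
        by_cases hp : p = i
        · exact Finset.prod_eq_zero (i := j) (by simp [hp, hij.symm]) (by rw [hdij, sub_self])
        · exact Finset.prod_eq_zero (i := i) (by simp [Ne.symm hp]) (sub_self _))
      (by
        rw [hprod, Finset.sum_eq_single l]
        · exact Finset.prod_ne_zero_iff.2 fun q hq => hdl q (Finset.ne_of_mem_erase hq)
        · intro p _ hp
          exact Finset.prod_eq_zero (i := l) (by simp [Ne.symm hp]) (sub_self _)
        · simp)
    have hmap : (aeval M Q).map (Int.castRingHom ℝ) = aeval (M.map (Int.castRingHom ℝ)) Q :=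
      (aeval_algHom_apply ((Int.castRingHom ℝ).mapMatrix (m := Fin n)).toIntAlgHom M Q).symm
    have key : ∀ (v : Fin n → ℤ) p, (g.1 *ᵥ intVec (aeval M Q *ᵥ v)) p =
        aeval (d p) Q * (g.1 *ᵥ intVec v) p := by
      intro v p
      rw [← map_mulVec_intVec, hmap, mulVec_mulVec, mul_aeval_of_semiconj hsemi,
        aeval_diagonal_apply, ← mulVec_mulVec, mulVec_diagonal]
    have hv : (Pi.single l 1 : Fin n → ℤ) ≠ 0 := by simp
    refine coord_ne_zero hZ hA hy (v := aeval M Q *ᵥ Pi.single l 1) ?_ i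
      (by rw [key, hQ0, zero_mul])
    intro h0
    have h1 := key (Pi.single l 1) l
    rw [h0] at h1
    have h2 : intVec (0 : Fin n → ℤ) = 0 := by ext; simp [intVec]
    rw [h2, mulVec_zero] at h1
    exact mul_ne_zero hQ1 (coord_ne_zero hZ hA hy hv l) h1.symm

/-- The parametrisation of `A` as a homomorphism. -/
noncomputable def dgHom (n : ℕ) : Multiplicative (Fin n → ℝ) →* SLR n where
  toFun c := dg c.toAdd
  map_one' := dg_zero
  map_mul' c d := dg_add c.toAdd d.toAdd

/-- The stabiliser of a point with compact `A`-orbit is cocompact in `A`. -/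
lemma bounded_return {n : ℕ} {y : SLR n ⧸ GammaZ n}
    (hy : IsCompact ((fun g : SLR n => g • y) '' posDiag n)) :
    ∃ R : ℝ, ∀ c : Fin n → ℝ, ∃ c₀ : Fin n → ℝ, (∀ p, |c₀ p| ≤ R) ∧ dg (c - c₀) • y = y := by
  let E := Multiplicative (Fin n → ℝ)
  let : MulAction E (SLR n ⧸ GammaZ n) := MulAction.compHom _ (dgHom n)
  have hsmul : ∀ (e : E) (z : SLR n ⧸ GammaZ n), e • z = dg e.toAdd • z := fun _ _ => rfl
  let O := MulAction.orbit E y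
  have hO : (O : Set _) = (fun g : SLR n => g • y) '' posDiag n := by
    ext z
    rw [posDiag_eq_range]
    constructor
    · rintro ⟨e, rfl⟩; exact ⟨_, ⟨e.toAdd, rfl⟩, rfl⟩
    · rintro ⟨_, ⟨c, rfl⟩, rfl⟩; exact ⟨Multiplicative.ofAdd c, rfl⟩
  have : CompactSpace O := isCompact_iff_compactSpace.1 (hO ▸ hy)
  have : SigmaCompactSpace E := inferInstanceAs (SigmaCompactSpace (Fin n → ℝ))
  have : IsTopologicalGroup E := inferInstance
  have : ContinuousSMul E O := ⟨by
    refine Continuous.subtype_mk ?_ _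
    exact ((continuous_dg.comp (continuous_toAdd.comp continuous_fst)).smul
      (continuous_subtype_val.comp continuous_snd))⟩
  let y₀ : O := ⟨y, MulAction.mem_orbit_self y⟩
  have hopen := isOpenMap_smul_of_sigmaCompact (G := E) y₀
  let B : ℕ → Set E := fun m => Multiplicative.toAdd ⁻¹' Metric.ball (0 : Fin n → ℝ) m
  have hB : ∀ m, IsOpen (B m) := fun m => Metric.isOpen_ball.preimage continuous_toAdd
  obtain ⟨m, hm⟩ := isCompact_univ.elim_directed_cover (fun m => (fun e : E => e • y₀) '' B m)
    (fun m => hopen _ (hB m))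
    (by
      intro z _
      obtain ⟨e, he⟩ := MulAction.exists_smul_eq E y₀ z
      obtain ⟨m, hm⟩ := exists_nat_gt ‖e.toAdd‖
      exact Set.mem_iUnion.2 ⟨m, e, by simpa [B] using hm, he⟩)
    (by
      intro a b
      refine ⟨max a b, ?_, ?_⟩
      · exact Set.image_mono (Set.preimage_mono (Metric.ball_subset_ball (by simp)))
      · exact Set.image_mono (Set.preimage_mono (Metric.ball_subset_ball (by simp))))
  refine ⟨m, fun c => ?_⟩
  obtain ⟨e, he, hey⟩ := hm (Set.mem_univ (Multiplicative.ofAdd c • y₀))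
  refine ⟨e.toAdd, fun p => ?_, ?_⟩
  · have : ‖e.toAdd‖ < m := by simpa [B] using he
    exact (norm_le_pi_norm e.toAdd p).trans this.le
  · have h1 : dg e.toAdd • y = dg c • y := congrArg Subtype.val hey
    rw [sub_eq_neg_add, dg_add, mul_smul, ← h1, smul_smul, ← dg_add, neg_add_cancel, dg_zero,
      one_smul]

/-- On a compact `A`-orbit every `A_α`-orbit is dense. If not, the values of `α` on the stabiliser
would form a discrete group, and the stabiliser would contain elements of `A_α` having one
eigenvalue much smaller than all others. -/
lemma rootKer_orbit_dense {n : ℕ} (hn : 3 ≤ n) {y : SLR n ⧸ GammaZ n}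
    (hy : IsCompact ((fun g : SLR n => g • y) '' posDiag n)) {i j : Fin n} (hij : i ≠ j)
    (c : Fin n → ℝ) : dg c • y ∈ closure ((fun g : SLR n => g • y) '' rootKer n i j) := by
  let Λ : AddSubgroup ℝ :=
    { carrier := {t | ∃ c : Fin n → ℝ, dg c • y = y ∧ c i - c j = t}
      zero_mem' := ⟨0, by rw [dg_zero, one_smul], by simp⟩
      add_mem' := by
        rintro _ _ ⟨c, hc, rfl⟩ ⟨d, hd, rfl⟩
        exact ⟨c + d, by rw [dg_add, mul_smul, hd, hc], by simp; ring⟩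
      neg_mem' := by
        rintro _ ⟨c, hc, rfl⟩
        exact ⟨-c, by rw [dg_neg, inv_smul_eq_iff, hc], by simp; ring⟩ }
  rcases AddSubgroup.dense_or_cyclic Λ with hdense | ⟨a, ha⟩
  · let τ : ℝ → SLR n ⧸ GammaZ n := fun t => dg (c + Pi.single i (t - (c i - c j))) • y
    have hτ : Continuous τ := by
      have h1 : Continuous fun t : ℝ => c + Pi.single i (t - (c i - c j)) :=
        continuous_const.add ((continuous_single i).comp (by fun_prop))
      exact (continuous_dg.comp h1).smul continuous_const
    have h0 : τ (c i - c j) = dg c • y := by simp [τ]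
    rw [← h0]
    refine map_mem_closure hτ (hdense (c i - c j)) ?_
    rintro _ ⟨c', hc', rfl⟩
    refine ⟨dg (c + Pi.single i ((c' i - c' j) - (c i - c j)) - c'), dg_mem_rootKer ?_, ?_⟩
    · simp [hij.symm]; ring
    · dsimp only [τ]
      conv_lhs => rw [← hc']
      rw [smul_smul, ← dg_add, sub_add_cancel]
  · exfalso
    obtain ⟨R, hR⟩ := bounded_return hy
    obtain ⟨l, hli, hlj⟩ : ∃ l : Fin n, l ≠ i ∧ l ≠ j := by
      by_contra! hcon
      have : (Finset.univ : Finset (Fin n)) ⊆ {i, j} := by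
        intro l _
        by_cases h : l = i
        · simp [h]
        · simp [hcon l h]
      have := (Finset.card_le_card this).trans Finset.card_le_two
      simp at this
      omega
    obtain ⟨L, hL⟩ := exists_nat_gt (4 * R)
    choose c₀ hc₀ hc₀y using hR
    -- elements of the stabiliser at bounded distance from the ray contracting the `l`-coordinate
    let w : ℕ → Fin n → ℝ := fun t => Pi.single l (-(L * t : ℝ))
    let e : ℕ → Fin n → ℝ := fun t => w t - c₀ (w t)
    have hfin : {x : ℝ | x ∈ Λ ∧ |x| ≤ 2 * R}.Finite := by
      by_cases ha0 : a = 0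
      · refine (Set.finite_singleton (0 : ℝ)).subset ?_
        rintro x ⟨hx, -⟩
        rw [ha, AddSubgroup.mem_closure_singleton] at hx
        obtain ⟨k, rfl⟩ := hx
        simp [ha0]
      · refine ((Set.finite_Icc (-⌈2 * R / |a|⌉) ⌈2 * R / |a|⌉).image fun k : ℤ => k • a).subset ?_
        rintro x ⟨hx, hxR⟩
        rw [ha, AddSubgroup.mem_closure_singleton] at hx
        obtain ⟨k, rfl⟩ := hx
        refine ⟨k, abs_le.1 ?_, rfl⟩
        rw [zsmul_eq_mul, abs_mul, ← le_div_iff₀ (abs_pos.2 ha0)] at hxR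
        have : ((|k| : ℤ) : ℝ) ≤ (⌈2 * R / |a|⌉ : ℤ) := by
          push_cast; exact hxR.trans (Int.le_ceil _)
        exact_mod_cast this
    obtain ⟨t, t', htt', heq⟩ := Set.Finite.exists_lt_map_eq_of_forall_mem
      (f := fun t => e t i - e t j) (t := {x : ℝ | x ∈ Λ ∧ |x| ≤ 2 * R})
      (fun t => by
        refine ⟨⟨e t, hc₀y _, rfl⟩, ?_⟩
        have h1 := abs_le.1 (hc₀ (w t) i)
        have h2 := abs_le.1 (hc₀ (w t) j)
        have : e t i - e t j = c₀ (w t) j - c₀ (w t) i := by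
          simp [e, w, hli.symm, hlj.symm]; ring
        rw [this, abs_le]
        constructor <;> linarith) hfin
    have hfix : dg (e t' - e t) • y = y := by
      rw [sub_eq_neg_add, dg_add, mul_smul, hc₀y, dg_neg, inv_smul_eq_iff, hc₀y]
    have hinv : ∀ c : Fin n → ℝ, ∀ z ∈ (fun g : SLR n => g • y) '' posDiag n,
        dg c • z ∈ (fun g : SLR n => g • y) '' posDiag n := by
      rw [posDiag_eq_range]
      rintro c _ ⟨_, ⟨d, rfl⟩, rfl⟩
      exact ⟨dg (c + d), ⟨_, rfl⟩, by dsimp only; rw [dg_add, mul_smul]⟩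
    refine no_simple_eigenvalue hy hinv (y := y) ⟨1, by rw [← dg_zero]; exact dg_mem 0, one_smul _ _⟩
      hfix hij (l := l) ?_ ?_
    · simp only [Pi.sub_apply]; linarith
    · intro p hp heqp
      have h1 := abs_le.1 (hc₀ (w t) l)
      have h2 := abs_le.1 (hc₀ (w t') l)
      have h3 := abs_le.1 (hc₀ (w t) p)
      have h4 := abs_le.1 (hc₀ (w t') p)
      have htt : (t : ℝ) + 1 ≤ t' := by exact_mod_cast htt'
      have hLL : (L : ℝ) * (t + 1) ≤ L * t' := mul_le_mul_of_nonneg_left htt (Nat.cast_nonneg L)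
      simp [e, w, hp] at heqp
      linarith

/-! ### Minimal sets -/

/-- A nonempty compact set invariant under a group `S` contains a compact `S`-minimal set. -/
lemma exists_minimalOn {G X : Type*} [Group G] [TopologicalSpace G] [TopologicalSpace X]
    [T2Space X] [MulAction G X] [ContinuousConstSMul G X] (S : Subgroup G) {Y : Set X}
    (hY : IsCompact Y) (hne : Y.Nonempty) (hinv : ∀ g ∈ S, ∀ z ∈ Y, g • z ∈ Y) :
    ∃ M ⊆ Y, IsCompact M ∧ IsMinimalOn (S : Set G) M := by
  let F : Set (Set X) := {Z | IsCompact Z ∧ Z.Nonempty ∧ ∀ g ∈ S, ∀ z ∈ Z, g • z ∈ Z}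
  obtain ⟨M, hMY, hM⟩ := zorn_superset_nonempty F (by
    intro c hc hchain hcne
    refine ⟨⋂₀ c, ⟨?_, ?_, ?_⟩, fun s hs => Set.sInter_subset_of_mem hs⟩
    · obtain ⟨s, hs⟩ := hcne
      exact (hc hs).1.of_isClosed_subset
        (isClosed_sInter fun t ht => (hc ht).1.isClosed) (Set.sInter_subset_of_mem hs)
    · have := hcne.to_subtype
      exact IsCompact.nonempty_sInter_of_directed_nonempty_isCompact_isClosed
        (fun a ha b hb => (hchain.total ha hb).elim (fun h => ⟨a, ha, subset_rfl, h⟩)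
          fun h => ⟨b, hb, h, subset_rfl⟩) (fun t ht => (hc ht).2.1) (fun t ht => (hc ht).1)
        (fun t ht => (hc ht).1.isClosed)
    · intro g hg z hz t ht
      exact (hc ht).2.2 g hg z (hz t ht)) Y ⟨hY, hne, hinv⟩
  obtain ⟨hMc, hMne, hMinv⟩ := hM.prop
  refine ⟨M, hMY, hMc, hMne, fun g hg => ?_, fun z hz => ?_⟩
  · refine Set.Subset.antisymm (by rintro _ ⟨z, hz, rfl⟩; exact hMinv g hg z hz) fun z hz => ?_
    exact ⟨g⁻¹ • z, hMinv _ (S.inv_mem hg) z hz, smul_inv_smul g z⟩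
  · have hsub : closure ((· • z) '' (S : Set G)) ⊆ M :=
      hMc.isClosed.closure_subset_iff.2 (by rintro _ ⟨g, hg, rfl⟩; exact hMinv g hg z hz)
    refine hM.le_of_le (y := closure ((· • z) '' (S : Set G))) ⟨?_, ?_, ?_⟩ hsub
    · exact hMc.of_isClosed_subset isClosed_closure hsub
    · exact ⟨z, subset_closure ⟨1, S.one_mem, one_smul G z⟩⟩
    · intro g hg w hw
      refine map_mem_closure (continuous_const_smul g) hw ?_
      rintro _ ⟨h, hh, rfl⟩
      exact ⟨g * h, S.mul_mem hg hh, mul_smul g h z⟩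

lemma IsMinimalOn.smul_mem {G X : Type*} [SMul G X] [TopologicalSpace X] {S : Set G} {Z : Set X}
    (h : IsMinimalOn S Z) {g : G} (hg : g ∈ S) {z : X} (hz : z ∈ Z) : g • z ∈ Z := by
  rw [← h.2.1 g hg]; exact ⟨z, hz, rfl⟩

lemma IsMinimalOn.dg_smul_mem {n : ℕ} {Y : Set (SLR n ⧸ GammaZ n)}
    (h : IsMinimalOn (posDiag n) Y) (c : Fin n → ℝ) : ∀ z ∈ Y, dg c • z ∈ Y :=
  fun _ hz => h.smul_mem (dg_mem c) hz

/-- A closed `S`-invariant set meeting an `S`-minimal set contains it. -/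
lemma IsMinimalOn.subset_of_mem {G X : Type*} [SMul G X] [TopologicalSpace X] {S : Set G}
    {Z W : Set X} (h : IsMinimalOn S Z) (hW : IsClosed W) {z : X} (hz : z ∈ Z)
    (hS : ∀ g ∈ S, g • z ∈ W) : Z ⊆ W :=
  (h.2.2 z hz).trans (hW.closure_subset_iff.2 (by rintro _ ⟨g, hg, rfl⟩; exact hS g hg))

/-- `A` as a subgroup. -/
def posDiagSubgroup (n : ℕ) : Subgroup (SLR n) where
  carrier := posDiag n
  one_mem' := by rw [← dg_zero]; exact dg_mem 0
  mul_mem' := by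
    rw [posDiag_eq_range]; rintro _ _ ⟨c, rfl⟩ ⟨d, rfl⟩; exact ⟨c + d, dg_add c d⟩
  inv_mem' := by
    rw [posDiag_eq_range]; rintro _ ⟨c, rfl⟩; exact ⟨-c, dg_neg c⟩

/-- `A_α` as a subgroup. -/
def rootKerSubgroup (n : ℕ) (i j : Fin n) : Subgroup (SLR n) where
  carrier := rootKer n i j
  one_mem' := by rw [← dg_zero]; exact dg_mem_rootKer rfl
  mul_mem' := by
    rw [rootKer_eq_image]
    rintro _ _ ⟨c, hc, rfl⟩ ⟨d, hd, rfl⟩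
    refine ⟨c + d, ?_, dg_add c d⟩
    have hc' : c i = c j := hc
    have hd' : d i = d j := hd
    change c i + d i = c j + d j
    rw [hc', hd']
  inv_mem' := by
    rw [rootKer_eq_image]
    rintro _ ⟨c, hc, rfl⟩
    refine ⟨-c, ?_, dg_neg c⟩
    have hc' : c i = c j := hc
    change -c i = -c j
    rw [hc']

lemma mem_orbit_self {n : ℕ} (x : SLR n ⧸ GammaZ n) :
    x ∈ (fun g : SLR n => g • x) '' posDiag n :=
  ⟨1, (posDiagSubgroup n).one_mem, one_smul _ x⟩

lemma dg_smul_mem_orbit {n : ℕ} (x : SLR n ⧸ GammaZ n) (c : Fin n → ℝ) :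
    ∀ z ∈ (fun g : SLR n => g • x) '' posDiag n,
      dg c • z ∈ (fun g : SLR n => g • x) '' posDiag n := by
  rintro _ ⟨g, hg, rfl⟩
  exact ⟨dg c * g, (posDiagSubgroup n).mul_mem (dg_mem c) hg, mul_smul _ g x⟩

lemma orbit_eq_of_mem {n : ℕ} {x y : SLR n ⧸ GammaZ n}
    (h : y ∈ (fun g : SLR n => g • x) '' posDiag n) :
    (fun g : SLR n => g • y) '' posDiag n = (fun g : SLR n => g • x) '' posDiag n := by
  obtain ⟨g, hg, rfl⟩ := h
  refine Set.Subset.antisymm ?_ ?_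
  · rintro _ ⟨k, hk, rfl⟩
    exact ⟨k * g, (posDiagSubgroup n).mul_mem hk hg, mul_smul _ _ x⟩
  · rintro _ ⟨k, hk, rfl⟩
    refine ⟨k * g⁻¹, (posDiagSubgroup n).mul_mem hk ((posDiagSubgroup n).inv_mem hg), ?_⟩
    simp [mul_smul]

/-! ### From a single root element to a contradiction -/

lemma elemU_nat_mul {n : ℕ} {i j : Fin n} (hij : i ≠ j) (s : ℝ) (k : ℕ) :
    elemU n hij (k * s) = elemU n hij s ^ k := by
  induction k with
  | zero => simp [elemU_zero]
  | succ k ih => rw [pow_succ, ← ih, ← elemU_add]; congr 1; push_cast; ring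

/-- An element commuting with `A_α` that maps one point of a compact `A_α`-minimal set `M` into
`M` stabilises `M`. -/
lemma mem_stabilizer_of_comm {n : ℕ} {i j : Fin n} {M : Set (SLR n ⧸ GammaZ n)}
    (hMc : IsCompact M) (hM : IsMinimalOn (rootKer n i j) M) {c : SLR n}
    (hc : ∀ g ∈ rootKer n i j, Commute c g) {z : SLR n ⧸ GammaZ n} (hz : z ∈ M)
    (hcz : c • z ∈ M) : c ∈ MulAction.stabilizer (SLR n) M := by
  have key : ∀ c : SLR n, (∀ g ∈ rootKer n i j, Commute c g) → ∀ z ∈ M, c • z ∈ M →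
      ∀ m ∈ M, c • m ∈ M := by
    intro c hc z hz hcz
    have hcl : IsClosed ((fun m : SLR n ⧸ GammaZ n => c • m) ⁻¹' M) :=
      hMc.isClosed.preimage (continuous_const_smul c)
    exact hM.subset_of_mem hcl hz fun g hg => by
      change c • g • z ∈ M
      rw [← mul_smul, (hc g hg).eq, mul_smul]
      exact hM.smul_mem hg hcz
  rw [MulAction.mem_stabilizer_set]
  intro b
  refine ⟨fun h => ?_, key c hc z hz hcz b⟩
  have := key c⁻¹ (fun g hg => (hc g hg).inv_left) (c • z) hcz (by rwa [inv_smul_smul]) _ h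
  rwa [inv_smul_smul] at this

lemma commute_elemU_mul_dg {n : ℕ} {i j : Fin n} (hij : i ≠ j) (s : ℝ) (b : Fin n → ℝ) :
    ∀ g ∈ rootKer n i j, Commute (elemU n hij s * dg b) g := by
  rw [rootKer_eq_image]
  rintro _ ⟨c, hc, rfl⟩
  exact Commute.mul_left (elemU_comm_dg hij hc s).symm (dg_comm b c)

lemma dg_nat_mul {n : ℕ} (d : Fin n → ℝ) (k : ℕ) : dg ((k : ℝ) • d) = dg d ^ k := by
  induction k with
  | zero => simp [dg_zero]
  | succ k ih => rw [pow_succ, ← ih, ← dg_add]; congr 1; push_cast; rw [add_smul, one_smul]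

/-- Let `w ∈ U_α` and `a ∈ A` with `α(a) > 1`. If `w a w⁻¹` stabilises a subset `M` of a compact
`A`-invariant set `Y`, then `w⁻¹ M ⊆ Y`: for `m ∈ M`, the points
`a⁻ᵏ (w aᵏ w⁻¹) m = (a⁻ᵏ w aᵏ) w⁻¹ m` of `Y` tend to `w⁻¹ m`. -/
lemma conj_limit {n : ℕ} {i j : Fin n} (hij : i ≠ j) {M Y : Set (SLR n ⧸ GammaZ n)}
    (hY : IsCompact Y) (hYA : ∀ c : Fin n → ℝ, ∀ z ∈ Y, dg c • z ∈ Y) (hMY : M ⊆ Y)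
    {d : Fin n → ℝ} (hd : 0 < d i - d j) (s : ℝ)
    (hQ : elemU n hij s * dg d * (elemU n hij s)⁻¹ ∈ MulAction.stabilizer (SLR n) M)
    {m : SLR n ⧸ GammaZ n} (hm : m ∈ M) : (elemU n hij s)⁻¹ • m ∈ Y := by
  have hmem : ∀ k : ℕ, elemU n hij (Real.exp (-(k * (d i - d j))) * s) •
      ((elemU n hij s)⁻¹ • m) ∈ Y := by
    intro k
    have h1 := (MulAction.mem_stabilizer_set.1 (Subgroup.pow_mem _ hQ k) m).2 hm
    have h2 := hYA (-((k : ℝ) • d)) _ (hMY h1)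
    rw [conj_pow, ← dg_nat_mul, ← mul_smul, ← mul_assoc, ← mul_assoc, dg_mul_elemU,
      mul_assoc _ (dg _) (dg _), ← dg_add, neg_add_cancel, dg_zero, mul_one, mul_smul] at h2
    convert h2 using 3
    simp only [Pi.neg_apply, Pi.smul_apply, smul_eq_mul]
    congr 2
    ring
  have hlim : Tendsto (fun k : ℕ => Real.exp (-(k * (d i - d j))) * s) atTop (𝓝 0) := by
    have h1 : Tendsto (fun k : ℕ => (k : ℝ) * (d i - d j)) atTop atTop :=
      tendsto_natCast_atTop_atTop.atTop_mul_const hd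
    simpa using (Real.tendsto_exp_neg_atTop_nhds_zero.comp h1).mul_const s
  have h2 := ((continuous_elemU hij).tendsto 0).comp hlim
  rw [elemU_zero] at h2
  have := hY.isClosed.mem_of_tendsto (h2.smul_const ((elemU n hij s)⁻¹ • m))
    (Eventually.of_forall hmem)
  rwa [one_smul] at this

lemma elemU_dg_mul {n : ℕ} {i j : Fin n} (hij : i ≠ j) (r q : ℝ) (b d : Fin n → ℝ) :
    elemU n hij r * dg b * (elemU n hij q * dg d) =
      elemU n hij (r + Real.exp (b i - b j) * q) * dg (b + d) := by
  rw [elemU_add, dg_add, mul_assoc, ← mul_assoc (dg b), dg_mul_elemU]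
  simp only [mul_assoc]

/-- If `A · M = Y` and some nontrivial `u ∈ U_α` maps a point of `Y` into `Y`, then the stabiliser
of `M` meets `U_α` nontrivially. It contains some `u' b` with `1 ≠ u' ∈ U_α` and `b ∈ A`. If
`α(b) = 1`, then `b` stabilises `M` and so does `u'`. Otherwise `u' b = w b w⁻¹` for some `w ∈ U_α`,
`conj_limit` and a correction by `A` put an element of `U_α A` carrying the fixed point of `u' b`
elsewhere into the stabiliser, and its commutator with `u' b` is a nontrivial element of `U_α`. -/
lemma exists_elemU_stabilizer {n : ℕ} {i j : Fin n} (hij : i ≠ j) {M Y : Set (SLR n ⧸ GammaZ n)}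
    (hY : IsCompact Y) (hYA : ∀ c : Fin n → ℝ, ∀ z ∈ Y, dg c • z ∈ Y) (hMY : M ⊆ Y)
    (hMc : IsCompact M) (hM : IsMinimalOn (rootKer n i j) M)
    (hAM : ∀ y ∈ Y, ∃ a : Fin n → ℝ, ∃ m ∈ M, dg a • m = y)
    {s : ℝ} (hs : s ≠ 0) {y : SLR n ⧸ GammaZ n} (hy : y ∈ Y) (hsy : elemU n hij s • y ∈ Y) :
    ∃ s₀ : ℝ, s₀ ≠ 0 ∧ elemU n hij s₀ ∈ MulAction.stabilizer (SLR n) M := by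
  -- An element of `U_α A` mapping a point of `M` to `Y` can be corrected by `A` to stabilise `M`.
  have hcorr : ∀ (r : ℝ) (m : SLR n ⧸ GammaZ n), m ∈ M → elemU n hij r • m ∈ Y →
      ∃ b : Fin n → ℝ, elemU n hij (Real.exp (b i - b j) * r) * dg b ∈
        MulAction.stabilizer (SLR n) M := by
    intro r m hm hrm
    obtain ⟨a, m', hm', h⟩ := hAM _ hrm
    refine ⟨-a, mem_stabilizer_of_comm hMc hM (commute_elemU_mul_dg hij _ _) hm ?_⟩
    rw [← dg_mul_elemU, mul_smul, ← h, ← mul_smul, ← dg_add, neg_add_cancel, dg_zero, one_smul]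
    exact hm'
  obtain ⟨a₁, m₀, hm₀, rfl⟩ := hAM y hy
  have h0 : elemU n hij (Real.exp ((-a₁) i - (-a₁) j) * s) • m₀ ∈ Y := by
    have := hYA (-a₁) _ hsy
    rwa [← mul_smul, ← mul_smul, dg_mul_elemU, mul_assoc, ← dg_add, neg_add_cancel, dg_zero,
      mul_one] at this
  obtain ⟨b, hb⟩ := hcorr _ m₀ hm₀ h0
  set p := Real.exp (b i - b j) * (Real.exp ((-a₁) i - (-a₁) j) * s) with hp
  have hp0 : p ≠ 0 := by positivity
  refine ⟨p, hp0, ?_⟩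
  by_cases hbij : b i = b j
  · have h1 : dg b ∈ MulAction.stabilizer (SLR n) M :=
      hM.2.1 _ (dg_mem_rootKer hbij)
    have := Subgroup.mul_mem _ hb (Subgroup.inv_mem _ h1)
    rwa [mul_inv_cancel_right] at this
  set l := Real.exp (b i - b j) with hl
  have hl1 : 1 - l ≠ 0 := by
    intro h
    have : Real.exp (b i - b j) = 1 := by linarith
    rw [Real.exp_eq_one_iff] at this
    exact hbij (by linarith)
  -- `t` is the fixed point of the affine map `x ↦ l x + p` attached to `elemU p * dg b`.
  set t := p / (1 - l) with ht
  have hpt : p = t - l * t := by rw [ht]; field_simp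
  have hP : elemU n hij t * dg b * (elemU n hij t)⁻¹ = elemU n hij p * dg b := by
    rw [← elemU_neg, mul_assoc, dg_mul_elemU, ← mul_assoc, ← elemU_add]
    congr 2
    rw [hpt]; ring
  have hwm : (elemU n hij t)⁻¹ • m₀ ∈ Y := by
    rcases lt_or_gt_of_ne hbij with h | h
    · refine conj_limit hij hY hYA hMY (d := -b) (by simp; linarith) t ?_ hm₀
      have : elemU n hij t * dg (-b) * (elemU n hij t)⁻¹ = (elemU n hij p * dg b)⁻¹ := by
        rw [← hP, dg_neg]; group
      rw [this]
      exact Subgroup.inv_mem _ hb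
    · exact conj_limit hij hY hYA hMY (d := b) (by linarith) t (by rwa [hP]) hm₀
  rw [← elemU_neg] at hwm
  obtain ⟨d, hR⟩ := hcorr _ m₀ hm₀ hwm
  have hcomm : elemU n hij p = (elemU n hij p * dg b) *
      (elemU n hij (Real.exp (d i - d j) * -t) * dg d) *
      ((elemU n hij (Real.exp (d i - d j) * -t) * dg d) * (elemU n hij p * dg b))⁻¹ := by
    rw [eq_mul_inv_iff_mul_eq, elemU_dg_mul, elemU_dg_mul, ← mul_assoc, ← elemU_add,
      add_comm d b]
    congr 2
    rw [← hl, hpt]; ring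
  rw [hcomm]
  exact Subgroup.mul_mem _ (Subgroup.mul_mem _ hb hR)
    (Subgroup.inv_mem _ (Subgroup.mul_mem _ hR hb))

/-- Rescaling by `A` a discrete set of elements `u_α(k s)`, `k ∈ ℕ`, makes it dense in a half of
`U_α`; so no nontrivial element of `U_α` stabilises a subset of a compact `A`-invariant set. -/
lemma elemU_notMem_stabilizer {n : ℕ} {i j : Fin n} (hij : i ≠ j) {M Y : Set (SLR n ⧸ GammaZ n)}
    (hY : IsCompact Y) (hYA : ∀ c : Fin n → ℝ, ∀ z ∈ Y, dg c • z ∈ Y) (hMY : M ⊆ Y)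
    (hne : M.Nonempty) {s : ℝ} (hs : s ≠ 0) :
    elemU n hij s ∉ MulAction.stabilizer (SLR n) M := by
  intro hst
  obtain ⟨m, hm⟩ := hne
  let b : ℕ → Fin n → ℝ := fun N => Pi.single i (-(N : ℝ))
  have hb : ∀ N, b N i - b N j = -(N : ℝ) := fun N => by simp [b, hij.symm]
  let u : Ultrafilter ℕ := Ultrafilter.of atTop
  obtain ⟨y, hy, hlim⟩ := exists_limit u hY (z := fun N => dg (b N) • m)
    fun N => hYA _ _ (hMY hm)
  refine no_half_orbit hY hYA hij y s hs fun t ht => ?_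
  have hf : Tendsto (fun N : ℕ => (⌊t * Real.exp N⌋₊ : ℝ) / Real.exp N) atTop (𝓝 t) :=
    (tendsto_nat_floor_mul_div_atTop ht.le).comp
      (Real.tendsto_exp_atTop.comp tendsto_natCast_atTop_atTop)
  have hf' := ((continuous_elemU hij).tendsto (t * s)).comp
    ((hf.mul_const s).mono_left (Ultrafilter.of_le (atTop : Filter ℕ)))
  refine smul_limit_mem hY hlim hf' (Eventually.of_forall fun N => ?_)
  have h1 := (MulAction.mem_stabilizer_set.1
    (Subgroup.pow_mem _ hst ⌊t * Real.exp N⌋₊) m).2 hm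
  have h2 := hYA (b N) _ (hMY h1)
  rw [← elemU_nat_mul, ← mul_smul, dg_mul_elemU, hb, mul_smul] at h2
  convert h2 using 3
  simp only [Function.comp_apply]
  congr 1
  rw [Real.exp_neg]
  ring

/-! ### The equivalences -/

/-- (d) implies (a). -/
lemma minimal_eq_orbit {n : ℕ}
    (hd : ∀ (i j : Fin n), i ≠ j → ∀ Y : Set (SLR n ⧸ GammaZ n),
      IsCompact Y → IsMinimalOn (posDiag n) Y →
      ∃ Yα ⊆ Y, IsCompact Yα ∧ IsMinimalOn (rootKer n i j) Yα ∧ posDiag n • Yα = Y)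
    {Y : Set (SLR n ⧸ GammaZ n)} (hY : IsCompact Y) (hmin : IsMinimalOn (posDiag n) Y) :
    ∃ x : SLR n ⧸ GammaZ n, Y = (fun g : SLR n => g • x) '' posDiag n := by
  obtain ⟨y, hy⟩ := hmin.1
  by_cases H : ∀ V ∈ 𝓝 (1 : SLR n), ∃ g ∈ V, g ∉ posDiag n ∧ g • y ∈ Y
  · exfalso
    obtain ⟨i, j, hij, s, hs, y', hy', hsy'⟩ :=
      isolate_root hY hY hmin.dg_smul_mem hmin.dg_smul_mem hy H
    obtain ⟨M, hMY, hMc, hM, hAM⟩ := hd i j hij Y hY hmin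
    obtain ⟨s₀, hs₀, hst⟩ := exists_elemU_stabilizer hij hY hmin.dg_smul_mem hMY hMc hM
      (fun z hz => by
        rw [← hAM] at hz
        obtain ⟨g, hg, m, hm, rfl⟩ := Set.mem_smul.1 hz
        rw [posDiag_eq_range] at hg
        obtain ⟨a, rfl⟩ := hg
        exact ⟨a, m, hm, rfl⟩) hs hy' hsy'
    exact elemU_notMem_stabilizer hij hY hmin.dg_smul_mem hMY hM.1 hs₀ hst
  · push Not at H
    obtain ⟨V, hV, hVY⟩ := H
    -- Near `y`, the set `Y` lies in the `A`-orbit of `y`, and every `A`-orbit in `Y` comes near `y`.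
    refine ⟨y, Set.Subset.antisymm (fun z hz => ?_) ?_⟩
    · obtain ⟨_, ⟨g, hg, hgy⟩, ⟨a, ha, rfl⟩⟩ :=
        mem_closure_iff_nhds.1 (hmin.2.2 z hz hy) _ (exists_smul_mem_of_nhds y V hV)
      have hgy' : g • y = a • z := hgy
      have hgA : g ∈ posDiag n := by
        by_contra hgA
        exact hVY g hg hgA (hgy'.symm ▸ hmin.smul_mem ha hz)
      refine ⟨a⁻¹ * g, (posDiagSubgroup n).mul_mem ((posDiagSubgroup n).inv_mem ha) hgA, ?_⟩
      change (a⁻¹ * g) • y = z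
      rw [mul_smul, hgy', inv_smul_smul]
    · rintro _ ⟨g, hg, rfl⟩
      exact hmin.smul_mem hg hy

/-- (a) implies (M). -/
lemma isClosed_orbit {n : ℕ} (hn : 3 ≤ n)
    (ha : ∀ Y : Set (SLR n ⧸ GammaZ n), IsCompact Y → IsMinimalOn (posDiag n) Y →
      ∃ x : SLR n ⧸ GammaZ n, Y = (fun g : SLR n => g • x) '' posDiag n)
    (x : SLR n ⧸ GammaZ n)
    (hZ : IsCompact (closure ((fun g : SLR n => g • x) '' posDiag n))) :
    IsClosed ((fun g : SLR n => g • x) '' posDiag n) := by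
  set O := (fun g : SLR n => g • x) '' posDiag n with hO
  have hZA : ∀ c : Fin n → ℝ, ∀ z ∈ closure O, dg c • z ∈ closure O := fun c z hz =>
    map_mem_closure (continuous_const_smul (dg c)) hz (dg_smul_mem_orbit x c)
  obtain ⟨Y, hYZ, hY, hmin⟩ := exists_minimalOn (posDiagSubgroup n) hZ
    ⟨x, subset_closure (mem_orbit_self x)⟩ (by
      intro g hg
      obtain ⟨c, rfl⟩ := (posDiag_eq_range n).subset hg
      exact hZA c)
  replace hmin : IsMinimalOn (posDiag n) Y := hmin
  obtain ⟨y, hYy⟩ := ha Y hY hmin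
  have hy : y ∈ Y := hYy ▸ mem_orbit_self y
  by_cases hyO : y ∈ O
  · rw [hO, ← orbit_eq_of_mem hyO, ← hYy]; exact hY.isClosed
  exfalso
  obtain ⟨i, j, hij, s, hs, y', hy', hsy'⟩ :=
    isolate_root hY hZ hmin.dg_smul_mem hZA hy fun V hV => by
      obtain ⟨_, ⟨g, hg, rfl⟩, hgO⟩ :=
        mem_closure_iff_nhds.1 (hYZ hy) _ (exists_smul_mem_of_nhds y V hV)
      refine ⟨g, hg, fun hgA => hyO ?_, subset_closure hgO⟩
      obtain ⟨c, rfl⟩ := (posDiag_eq_range n).subset hgA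
      have := dg_smul_mem_orbit x (-c) _ hgO
      change dg (-c) • dg c • y ∈ O at this
      rwa [dg_neg, inv_smul_smul] at this
  have hYy' : Y = (fun g : SLR n => g • y') '' posDiag n := by
    rw [hYy] at hy' ⊢; exact (orbit_eq_of_mem hy').symm
  -- `Y` is `A_α`-minimal, so `u_α(s)` maps all of `Y` into the orbit closure.
  have hall : ∀ c : Fin n → ℝ, elemU n hij s • dg c • y' ∈ closure O := by
    intro c
    have hcl : IsClosed ((fun z : SLR n ⧸ GammaZ n => elemU n hij s • z) ⁻¹' closure O) :=
      isClosed_closure.preimage (continuous_const_smul _)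
    refine hcl.closure_subset_iff.2 ?_
      (rootKer_orbit_dense hn (by rw [← hYy']; exact hY) hij c)
    rw [rootKer_eq_image]
    rintro _ ⟨_, ⟨d, hdd, rfl⟩, rfl⟩
    change elemU n hij s • dg d • y' ∈ closure O
    rw [← mul_smul, ← elemU_comm_dg hij hdd, mul_smul]
    exact hZA d _ hsy'
  refine no_half_orbit hZ hZA hij y' s hs fun t ht => ?_
  have h := hZA (Pi.single i (Real.log t)) _ (hall (-Pi.single i (Real.log t)))
  rw [← mul_smul, ← mul_smul, dg_mul_elemU, mul_assoc, ← dg_add, add_neg_cancel, dg_zero,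
    mul_one] at h
  simpa [hij.symm, Real.exp_log ht] using h

end

/-- Equivalence of Margulis' conjecture (M) with the four assertions (a)-(d) about
compact `A`-minimal sets in `X = SL_n(ℝ)/SL_n(ℤ)`, `n ≥ 3`. -/
theorem statement_1 (n : ℕ) (hn : 3 ≤ n) :
    List.TFAE [
      -- (M): every A-orbit with compact closure is closed
      ∀ x : SLR n ⧸ GammaZ n,
        IsCompact (closure ((· • x) '' posDiag n)) → IsClosed ((· • x) '' posDiag n),
      -- (a): every compact A-minimal set is a single compact A-orbit
      ∀ Y : Set (SLR n ⧸ GammaZ n), IsCompact Y → IsMinimalOn (posDiag n) Y →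
        ∃ x : SLR n ⧸ GammaZ n, Y = (· • x) '' posDiag n,
      -- (b): every compact A-minimal set is A_α-minimal for every root α
      ∀ (i j : Fin n), i ≠ j → ∀ Y : Set (SLR n ⧸ GammaZ n),
        IsCompact Y → IsMinimalOn (posDiag n) Y → IsMinimalOn (rootKer n i j) Y,
      -- (c): every A_α-minimal subset Y_α of a compact A-minimal Y satisfies A•Y_α = Y
      ∀ (i j : Fin n), i ≠ j → ∀ Y : Set (SLR n ⧸ GammaZ n),
        IsCompact Y → IsMinimalOn (posDiag n) Y →
        ∀ Yα ⊆ Y, IsCompact Yα → IsMinimalOn (rootKer n i j) Yα →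
          posDiag n • Yα = Y,
      -- (d): some A_α-minimal subset Y_α of a compact A-minimal Y satisfies A•Y_α = Y
      ∀ (i j : Fin n), i ≠ j → ∀ Y : Set (SLR n ⧸ GammaZ n),
        IsCompact Y → IsMinimalOn (posDiag n) Y →
        ∃ Yα ⊆ Y, IsCompact Yα ∧ IsMinimalOn (rootKer n i j) Yα ∧
          posDiag n • Yα = Y] := by
  tfae_have 1 → 2 := by
    intro hM Y hY hmin
    obtain ⟨y, hy⟩ := hmin.1
    have hsub : closure ((fun g : SLR n => g • y) '' posDiag n) ⊆ Y :=
      hY.isClosed.closure_subset_iff.2 (by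
        rintro _ ⟨g, hg, rfl⟩; exact hmin.smul_mem hg hy)
    have hcl := hM y (hY.of_isClosed_subset isClosed_closure hsub)
    exact ⟨y, Set.Subset.antisymm ((hmin.2.2 y hy).trans hcl.closure_eq.subset)
      (subset_closure.trans hsub)⟩
  tfae_have 2 → 1 := fun ha x hx => isClosed_orbit hn ha x hx
  tfae_have 2 → 3 := by
    intro ha i j hij Y hY hmin
    obtain ⟨x, hx⟩ := ha Y hY hmin
    refine ⟨hmin.1, fun g hg => hmin.2.1 g (rootKer_subset n i j hg), fun z hz => ?_⟩
    have hYz : Y = (fun g : SLR n => g • z) '' posDiag n := by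
      rw [hx] at hz ⊢; exact (orbit_eq_of_mem hz).symm
    intro w hw
    rw [hYz, posDiag_eq_range] at hw
    obtain ⟨_, ⟨c, rfl⟩, rfl⟩ := hw
    exact rootKer_orbit_dense hn (by rw [← hYz]; exact hY) hij c
  tfae_have 3 → 4 := by
    intro hb i j hij Y hY hmin Yα hsub hYα hminα
    obtain ⟨z, hz⟩ := hminα.1
    have hYY : Y ⊆ Yα := (hb i j hij Y hY hmin).subset_of_mem hYα.isClosed (hsub hz)
      fun g hg => hminα.smul_mem hg hz
    refine Set.Subset.antisymm ?_ fun y hy => ?_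
    · rintro _ ⟨g, hg, m, hm, rfl⟩
      exact hmin.smul_mem hg (hsub hm)
    · exact ⟨1, (posDiagSubgroup n).one_mem, y, hYY hy, one_smul _ y⟩
  tfae_have 4 → 5 := by
    intro hc i j hij Y hY hmin
    obtain ⟨M, hMY, hMc, hM⟩ := exists_minimalOn (rootKerSubgroup n i j) hY hmin.1
      fun g hg z hz => hmin.smul_mem (rootKer_subset n i j hg) hz
    exact ⟨M, hMY, hMc, hM, hc i j hij Y hY hmin M hMY hMc hM⟩
  tfae_have 5 → 2 := fun hd Y hY hmin => minimal_eq_orbit hd hY hmin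
  tfae_finish
end
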